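/- Let (Ω, 𝒜, μ) be a measure space, p ∈ [1,∞), and T a positive C₀-semigroup on L_p(μ) with generator A. If V : Ω → [0,∞] is T-admissible, then for every ε > 0 the function V is strongly T_{εV}-regular; that is, writing S := T_{εV}, the rate V is strongly S-regular: (S_V)_{−V} = S. In particular every positive multiple of V is strongly T_V-regular. -/

import Mathlib

open MeasureTheory Filter Topology ENNReal

noncomputable section

namespace Absorption

variable {E : Type*} [NormedAddCommGroup E] [NormedSpace ℝ E]

/-- A one-parameter semigroup of bounded operators (for nonnegative times). -/
def IsSemigroup (T : ℝ → E →L[ℝ] E) : Prop :=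
  T 0 = ContinuousLinearMap.id ℝ E ∧
    ∀ s t : ℝ, 0 ≤ s → 0 ≤ t → T (s + t) = (T s).comp (T t)

/-- A `C₀`-semigroup: a one-parameter semigroup which is strongly continuous on `[0, ∞)`. -/
def IsC0Semigroup (T : ℝ → E →L[ℝ] E) : Prop :=
  IsSemigroup T ∧ ∀ f : E, ContinuousOn (fun t => T t f) (Set.Ici (0 : ℝ))

/-- `(f, g)` belongs to the graph of the generator of the semigroup `T`. -/
def InGenerator (T : ℝ → E →L[ℝ] E) (f g : E) : Prop :=
  Tendsto (fun t : ℝ => t⁻¹ • (T t f - f)) (𝓝[>] (0 : ℝ)) (𝓝 g)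

variable {Ω : Type*} [MeasurableSpace Ω]

/-- A function into a measurable space is *locally measurable* (w.r.t. `μ`) if on every set of
finite measure it coincides a.e. with a measurable function. -/
def LocallyMeasurable {α : Type*} [MeasurableSpace α] (μ : Measure Ω) (V : Ω → α) : Prop :=
  ∀ B : Set Ω, MeasurableSet B → μ B < ∞ →
    ∃ g : Ω → α, Measurable g ∧ ∀ᵐ ω ∂(μ.restrict B), V ω = g ω

/-- A set is a local `μ`-null set if its intersection with every measurable set of finite
measure is null. -/
def IsLocalNullSet (μ : Measure Ω) (N : Set Ω) : Prop :=
  ∀ B : Set Ω, MeasurableSet B → μ B < ∞ → μ (N ∩ B) = 0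

/-- Positivity of a family of operators on `L_p` (for positive times). -/
def IsPositiveSG {p : ℝ≥0∞} {μ : Measure Ω} [Fact (1 ≤ p)]
    (T : ℝ → Lp ℝ p μ →L[ℝ] Lp ℝ p μ) : Prop :=
  ∀ t : ℝ, 0 ≤ t → ∀ f : Lp ℝ p μ, 0 ≤ f → 0 ≤ T t f

/-- A band projection on the Banach lattice `L_p(μ)`: an idempotent operator `P`
with `0 ≤ P f ≤ f` for all `f ≥ 0`. -/
def IsBandProjection {p : ℝ≥0∞} {μ : Measure Ω} [Fact (1 ≤ p)]
    (P : Lp ℝ p μ →L[ℝ] Lp ℝ p μ) : Prop :=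
  P.comp P = P ∧ ∀ f : Lp ℝ p μ, 0 ≤ f → 0 ≤ P f ∧ P f ≤ f

/-- `S = (e^{t(A−W)})_{t ≥ 0}`: `S` is the `C₀`-semigroup whose generator is `A - W`,
where `A` is the generator of `T` and the bounded function `W` acts by multiplication. -/
def IsPerturbedSG (μ : Measure Ω) (p : ℝ≥0∞) [Fact (1 ≤ p)]
    (T S : ℝ → Lp ℝ p μ →L[ℝ] Lp ℝ p μ) (W : Ω → ℝ) : Prop :=
  IsC0Semigroup S ∧
    ∀ f g : Lp ℝ p μ, InGenerator S f g ↔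
      ∃ g₀ : Lp ℝ p μ, InGenerator T f g₀ ∧
        ⇑g =ᵐ[μ] fun ω => g₀ ω - W ω * f ω

/-- Same as `IsPerturbedSG`, for semigroups acting on a subspace `F` of `L_p(μ)`. -/
def IsPerturbedSGSub (μ : Measure Ω) (p : ℝ≥0∞) [Fact (1 ≤ p)] (F : Submodule ℝ (Lp ℝ p μ))
    (T S : ℝ → F →L[ℝ] F) (W : Ω → ℝ) : Prop :=
  IsC0Semigroup S ∧
    ∀ f g : F, InGenerator S f g ↔
      ∃ g₀ : F, InGenerator T f g₀ ∧
        ⇑(g : Lp ℝ p μ) =ᵐ[μ] fun ω => (g₀ : Lp ℝ p μ) ω - W ω * (f : Lp ℝ p μ) ω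

/-- The truncation `V ∧ n` of `V : Ω → [0,∞]`, as a real-valued function. -/
def trunc (V : Ω → ℝ≥0∞) (n : ℕ) : Ω → ℝ := fun ω => (min (V ω) (n : ℝ≥0∞)).toReal

/-- The scalar multiple `ε V` of an absorption rate `V : Ω → [0,∞]`. -/
def smulRate (ε : ℝ) (V : Ω → ℝ≥0∞) : Ω → ℝ≥0∞ := fun ω => ENNReal.ofReal ε * V ω

/-- The absorption rate `V - V ∧ n` (with value `∞` wherever `V = ∞`). -/
def resid (V : Ω → ℝ≥0∞) (n : ℕ) : Ω → ℝ≥0∞ := fun ω => V ω - min (V ω) (n : ℝ≥0∞)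

/-- `TV` is the absorption semigroup `T_V` associated with the rate `V : Ω → [0,∞]`, i.e.
the strong limit `T_V(t) = s-lim_{n→∞} e^{t(A - V∧n)}` (for `t ≥ 0`). -/
def IsAbsorptionSG (μ : Measure Ω) (p : ℝ≥0∞) [Fact (1 ≤ p)]
    (T : ℝ → Lp ℝ p μ →L[ℝ] Lp ℝ p μ) (V : Ω → ℝ≥0∞)
    (TV : ℝ → Lp ℝ p μ →L[ℝ] Lp ℝ p μ) : Prop :=
  ∃ S : ℕ → ℝ → Lp ℝ p μ →L[ℝ] Lp ℝ p μ,
    (∀ n, IsPerturbedSG μ p T (S n) (trunc V n)) ∧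
    ∀ t : ℝ, 0 ≤ t → ∀ f, Tendsto (fun n => S n t f) atTop (𝓝 (TV t f))

/-- `V : Ω → [0,∞]` is `T`-admissible: `V` is locally measurable, the strong limits
`T_V(t) = s-lim_{n→∞} e^{t(A - V∧n)}` exist, and `T_V` is a `C₀`-semigroup. -/
def Admissible (μ : Measure Ω) (p : ℝ≥0∞) [Fact (1 ≤ p)]
    (T : ℝ → Lp ℝ p μ →L[ℝ] Lp ℝ p μ) (V : Ω → ℝ≥0∞) : Prop :=
  LocallyMeasurable μ V ∧
  ∃ TV, IsAbsorptionSG μ p T V TV ∧ IsC0Semigroup TV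

/-- The truncation `(V ∧ n) ∨ (−n)` of an extended-real-valued rate, as a real function. -/
def truncE (V : Ω → EReal) (n : ℕ) : Ω → ℝ :=
  fun ω => (max (min (V ω) (n : EReal)) (-(n : EReal))).toReal

/-- `TV` is the absorption semigroup `T_V` of an extended-real-valued rate `V`:
`T_V(t) = s-lim_{n→∞} e^{t(A - (V∧n)∨(−n))}` (for `t ≥ 0`). -/
def IsAbsorptionSGE (μ : Measure Ω) (p : ℝ≥0∞) [Fact (1 ≤ p)]
    (T : ℝ → Lp ℝ p μ →L[ℝ] Lp ℝ p μ) (V : Ω → EReal)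
    (TV : ℝ → Lp ℝ p μ →L[ℝ] Lp ℝ p μ) : Prop :=
  ∃ S : ℕ → ℝ → Lp ℝ p μ →L[ℝ] Lp ℝ p μ,
    (∀ n, IsPerturbedSG μ p T (S n) (truncE V n)) ∧
    ∀ t : ℝ, 0 ≤ t → ∀ f, Tendsto (fun n => S n t f) atTop (𝓝 (TV t f))

/-- `T`-admissibility for an extended-real-valued absorption rate `V`. -/
def AdmissibleE (μ : Measure Ω) (p : ℝ≥0∞) [Fact (1 ≤ p)]
    (T : ℝ → Lp ℝ p μ →L[ℝ] Lp ℝ p μ) (V : Ω → EReal) : Prop :=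
  LocallyMeasurable μ V ∧
  ∃ TV, IsAbsorptionSGE μ p T V TV ∧ IsC0Semigroup TV

end Absorption

open Absorption
namespace Absorption

/-- `V` is strongly `S`-regular: `V` is `S`-admissible and
`(S_V)_{−V} = s-lim_{n→∞} S_{V−V∧n} = S`. -/
def StronglyRegular {Ω : Type*} [MeasurableSpace Ω] (μ : Measure Ω) (p : ℝ≥0∞) [Fact (1 ≤ p)]
    (S : ℝ → Lp ℝ p μ →L[ℝ] Lp ℝ p μ) (V : Ω → ℝ≥0∞) : Prop :=
  Admissible μ p S V ∧
  ∀ R : ℕ → ℝ → Lp ℝ p μ →L[ℝ] Lp ℝ p μ,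
    (∀ n : ℕ, IsAbsorptionSG μ p S (resid V n) (R n)) →
    ∀ t : ℝ, 0 ≤ t → ∀ f : Lp ℝ p μ,
      Tendsto (fun n : ℕ => R n t f) atTop (𝓝 (S t f))

end Absorption

/-!
Two comparison principles for bounded perturbations carry the proof. If `T ≤ T'` are positive
semigroups with generators `A`, `A'` and `B ≤ B'` are bounded below by multiples of the identity,
then `e^{t(A + B)} ≤ e^{t(A' + B')}`; this is read off the Dyson–Phillips series after an
exponential rescaling. For a positive bounded operator `D`, the map `s ↦ e^{t(A + sD)}` is convex;
this follows from two applications of Duhamel's formula.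

Convexity at `e^{t(A - V∧n)}` in the direction `V∧n` gives `(1 + c) T_V - c T ≤ T_{cV} ≤ T`, so
`T_{cV}` is strongly continuous at `0`. Put `S = T_{εV}`. Comparison gives
`T_{(ε + 1)V} ≤ S_V ≤ S`, so `V` is `S`-admissible. Finally, convexity at `S` in the direction
`(V - V∧n) ∧ k`, followed by `k → ∞`, gives
`(ε + 1) S - e^{t(A - (εV)∧⌊εn⌋)} ≤ ε S_{V - V∧n} ≤ ε S`, and the left-hand side tends to `ε S`
as `n → ∞`.
-/

namespace Absorption

section Semigroup

variable {E : Type*} [NormedAddCommGroup E] [NormedSpace ℝ E] {T : ℝ → E →L[ℝ] E}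

/-! ### Semigroups and their orbits -/

lemma IsSemigroup.zero_apply (hT : IsSemigroup T) (f : E) : T 0 f = f := by
  rw [hT.1, ContinuousLinearMap.id_apply]

lemma IsSemigroup.add_apply (hT : IsSemigroup T) {s t : ℝ} (hs : 0 ≤ s) (ht : 0 ≤ t) (f : E) :
    T (s + t) f = T s (T t f) := by
  rw [hT.2 s t hs ht, ContinuousLinearMap.comp_apply]

/-- The orbit `t ↦ T t f`, extended by its value at `0` to negative times; for a `C₀`-semigroup
it is then continuous on the whole line. -/
def orbit (T : ℝ → E →L[ℝ] E) (f : E) (t : ℝ) : E := T (max t 0) f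

lemma orbit_of_nonneg (T : ℝ → E →L[ℝ] E) (f : E) {t : ℝ} (ht : 0 ≤ t) : orbit T f t = T t f := by
  rw [orbit, max_eq_left ht]

lemma IsSemigroup.orbit_add (hT : IsSemigroup T) {s t : ℝ} (hs : 0 ≤ s) (ht : 0 ≤ t) (f : E) :
    orbit T f (s + t) = T s (orbit T f t) := by
  rw [orbit_of_nonneg T f (add_nonneg hs ht), orbit_of_nonneg T f ht, hT.add_apply hs ht]

lemma norm_orbit_le {τ M : ℝ} (hτ : 0 ≤ τ) (hM : ∀ s ∈ Set.Icc 0 τ, ‖T s‖ ≤ M) (f : E)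
    {t : ℝ} (ht : t ≤ τ) : ‖orbit T f t‖ ≤ M * ‖f‖ :=
  (T _).le_of_opNorm_le (hM _ ⟨le_max_right _ _, max_le ht hτ⟩) f

lemma IsC0Semigroup.continuous_orbit (hT : IsC0Semigroup T) (f : E) : Continuous (orbit T f) :=
  (hT.2 f).comp_continuous (by fun_prop) fun t => Set.mem_Ici.2 (le_max_right t 0)

lemma IsC0Semigroup.exists_norm_le [CompleteSpace E] (hT : IsC0Semigroup T) (τ : ℝ) :
    ∃ M, ∀ s ∈ Set.Icc 0 τ, ‖T s‖ ≤ M := by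
  obtain ⟨M, hM⟩ := banach_steinhaus (g := fun s : Set.Icc 0 τ => T s) fun f => by
    obtain ⟨C, hC⟩ := isCompact_Icc.exists_bound_of_continuousOn
      ((hT.2 f).mono (Set.Icc_subset_Ici_self : Set.Icc 0 τ ⊆ _))
    exact ⟨C, fun s => hC s s.2⟩
  exact ⟨M, fun s hs => hM ⟨s, hs⟩⟩

lemma IsC0Semigroup.continuous_uncurry_orbit [CompleteSpace E] (hT : IsC0Semigroup T) :
    Continuous fun q : E × ℝ => orbit T q.1 q.2 := by
  refine continuous_iff_continuousAt.2 fun ⟨f, t⟩ => ?_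
  obtain ⟨M, hM⟩ := hT.exists_norm_le (max (t + 1) 0)
  have hcont : ContinuousOn (fun q : E × ℝ => orbit T q.1 q.2) (Set.univ ×ˢ Set.Iic (t + 1)) := by
    refine continuousOn_prod_of_continuousOn_lipschitzOnWith _ M.toNNReal
      (fun f _ => (hT.continuous_orbit f).continuousOn) fun s hs => ?_
    refine ((T (max s 0)).lipschitz.weaken ?_).lipschitzOnWith
    rw [← NNReal.coe_le_coe, coe_nnnorm]
    exact (hM _ ⟨le_max_right _ _, max_le_max_right 0 hs⟩).trans (Real.le_coe_toNNReal M)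
  exact hcont.continuousAt (prod_mem_nhds univ_mem (Iic_mem_nhds (by linarith)))

end Semigroup

section Duhamel

variable {E : Type*} [NormedAddCommGroup E] [NormedSpace ℝ E] {T : ℝ → E →L[ℝ] E} {g h : ℝ → E}

/-! ### Duhamel integrals -/

/-- The Duhamel integral `∫₀ᵗ T(t - s) g(s) ds` of an inhomogeneity `g`. -/
def duhamel (T : ℝ → E →L[ℝ] E) (g : ℝ → E) (t : ℝ) : E :=
  ∫ s in (0 : ℝ)..t, orbit T (g s) (t - s)

lemma duhamel_smul (T : ℝ → E →L[ℝ] E) (c : ℝ) (g : ℝ → E) (t : ℝ) :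
    duhamel T (fun s => c • g s) t = c • duhamel T g t := by
  simp only [duhamel, orbit, map_smul, intervalIntegral.integral_smul]

lemma duhamel_congr (T : ℝ → E →L[ℝ] E) {t : ℝ} (ht : 0 ≤ t) (hgh : ∀ s, 0 ≤ s → g s = h s) :
    duhamel T g t = duhamel T h t := by
  refine intervalIntegral.integral_congr fun s hs => ?_
  simp only [hgh s (Set.uIcc_of_le ht ▸ hs).1]

lemma norm_duhamel_le {τ M C : ℝ} (hM : ∀ s ∈ Set.Icc 0 τ, ‖T s‖ ≤ M) {k : ℕ}
    (hg : ∀ s ∈ Set.Icc 0 τ, ‖g s‖ ≤ C * (s ^ k / k.factorial)) {t : ℝ} (ht : t ∈ Set.Icc 0 τ) :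
    ‖duhamel T g t‖ ≤ M * C * (t ^ (k + 1) / (k + 1).factorial) := by
  have hτ : 0 ≤ τ := ht.1.trans ht.2
  have hM0 : 0 ≤ M := (norm_nonneg _).trans (hM 0 ⟨le_rfl, hτ⟩)
  calc ‖duhamel T g t‖ ≤ ∫ s in (0 : ℝ)..t, M * (C * (s ^ k / k.factorial)) := by
        refine intervalIntegral.norm_integral_le_of_norm_le ht.1 (ae_of_all _ fun s hs => ?_)
          (Continuous.intervalIntegrable (by fun_prop) _ _)
        refine (norm_orbit_le hτ hM (g s) (by linarith [hs.1, ht.2])).trans ?_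
        exact mul_le_mul_of_nonneg_left (hg s ⟨hs.1.le, hs.2.trans ht.2⟩) hM0
    _ = M * C * (t ^ (k + 1) / (k + 1).factorial) := by
        simp only [intervalIntegral.integral_const_mul, intervalIntegral.integral_div, integral_pow,
          Nat.factorial_succ]
        push_cast
        field_simp
        ring

variable [CompleteSpace E]

lemma IsC0Semigroup.continuous_duhamel_integrand (hT : IsC0Semigroup T) (hg : Continuous g) :
    Continuous fun q : ℝ × ℝ => orbit T (g q.2) (q.1 - q.2) :=
  hT.continuous_uncurry_orbit.comp (by fun_prop : Continuous fun q : ℝ × ℝ => (g q.2, q.1 - q.2))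

lemma IsC0Semigroup.intervalIntegrable_duhamel (hT : IsC0Semigroup T) (hg : Continuous g)
    (t a b : ℝ) : IntervalIntegrable (fun s => orbit T (g s) (t - s)) volume a b :=
  ((hT.continuous_duhamel_integrand hg).comp (Continuous.prodMk_right t)).intervalIntegrable _ _

lemma IsC0Semigroup.continuous_duhamel (hT : IsC0Semigroup T) (hg : Continuous g) :
    Continuous (duhamel T g) :=
  intervalIntegral.continuous_parametric_intervalIntegral_of_continuous
    (hT.continuous_duhamel_integrand hg) continuous_id

lemma IsC0Semigroup.duhamel_add (hT : IsC0Semigroup T) (hg : Continuous g) (hh : Continuous h)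
    (t : ℝ) : duhamel T (fun s => g s + h s) t = duhamel T g t + duhamel T h t := by
  simp only [duhamel, orbit, map_add]
  exact intervalIntegral.integral_add (hT.intervalIntegrable_duhamel hg t _ _)
    (hT.intervalIntegrable_duhamel hh t _ _)

lemma IsC0Semigroup.duhamel_sub (hT : IsC0Semigroup T) (hg : Continuous g) (hh : Continuous h)
    (t : ℝ) : duhamel T (fun s => g s - h s) t = duhamel T g t - duhamel T h t := by
  simp only [duhamel, orbit, map_sub]
  exact intervalIntegral.integral_sub (hT.intervalIntegrable_duhamel hg t _ _)
    (hT.intervalIntegrable_duhamel hh t _ _)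

lemma IsC0Semigroup.duhamel_time_add (hT : IsC0Semigroup T) (hg : Continuous g) {r t : ℝ}
    (hr : 0 ≤ r) (ht : 0 ≤ t) :
    duhamel T g (r + t) = T r (duhamel T g t) + duhamel T (fun s => g (t + s)) r := by
  rw [duhamel, ← intervalIntegral.integral_add_adjacent_intervals
    (hT.intervalIntegrable_duhamel hg (r + t) 0 t)
    (hT.intervalIntegrable_duhamel hg (r + t) t (r + t))]
  congr 1
  · rw [duhamel, ← (T r).intervalIntegral_comp_comm (hT.intervalIntegrable_duhamel hg t 0 t)]
    refine intervalIntegral.integral_congr fun s hs => ?_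
    have hst : 0 ≤ t - s := sub_nonneg.2 (Set.uIcc_of_le ht ▸ hs).2
    simp only [add_sub_assoc, hT.1.orbit_add hr hst]
  · have hshift := intervalIntegral.integral_comp_add_left
      (fun s => orbit T (g s) (r + t - s)) t (a := 0) (b := r)
    rw [add_zero, add_comm t r] at hshift
    rw [← hshift, duhamel]
    simp only [add_comm t, add_sub_add_right_eq_sub]

end Duhamel

section StrongConvergence

variable {E : Type*} [NormedAddCommGroup E] [NormedSpace ℝ E] {R : ℝ → E →L[ℝ] E}
  {Q : ℕ → ℝ → E →L[ℝ] E}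

/-! ### Strong continuity and strong limits -/

/-- Strong convergence `Q n t → R t`, pointwise in the time `t ≥ 0`. -/
def TendstoStrongly (Q : ℕ → ℝ → E →L[ℝ] E) (R : ℝ → E →L[ℝ] E) : Prop :=
  ∀ t, 0 ≤ t → ∀ f, Tendsto (fun n => Q n t f) atTop (𝓝 (R t f))

lemma TendstoStrongly.isSemigroup [CompleteSpace E] (hQR : TendstoStrongly Q R)
    (hQ : ∀ n, IsSemigroup (Q n)) : IsSemigroup R := by
  refine ⟨?_, fun s t hs ht => ?_⟩
  · ext f
    refine tendsto_nhds_unique (hQR 0 le_rfl f) ?_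
    simp only [(hQ _).zero_apply, ContinuousLinearMap.id_apply, tendsto_const_nhds]
  · ext f
    obtain ⟨M, hM⟩ := banach_steinhaus (g := fun n => Q n s) fun g => by
      obtain ⟨C, hC⟩ := (hQR s hs g).norm.bddAbove_range
      exact ⟨C, fun n => hC ⟨n, rfl⟩⟩
    have herror : Tendsto (fun n => Q n s (Q n t f - R t f)) atTop (𝓝 0) := by
      have h := (tendsto_iff_norm_sub_tendsto_zero.1 (hQR t ht f)).const_mul M
      rw [mul_zero] at h
      exact squeeze_zero_norm (fun n => (Q n s).le_of_opNorm_le (hM n) _) h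
    have hlim := herror.add (hQR s hs (R t f))
    rw [zero_add] at hlim
    refine tendsto_nhds_unique (hQR (s + t) (add_nonneg hs ht) f) (hlim.congr fun n => ?_)
    rw [map_sub, sub_add_cancel, (hQ n).add_apply hs ht]

lemma IsSemigroup.norm_sub_le (hR : IsSemigroup R) {τ M : ℝ}
    (hM : ∀ s ∈ Set.Icc 0 τ, ‖R s‖ ≤ M) (f : E) {s t : ℝ} (hs : s ∈ Set.Icc 0 τ)
    (ht : t ∈ Set.Icc 0 τ) : ‖R s f - R t f‖ ≤ M * ‖R |s - t| f - f‖ := by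
  wlog hts : t ≤ s generalizing s t
  · rw [norm_sub_rev, abs_sub_comm]
    exact this ht hs (le_of_not_ge hts)
  have hsplit : R s f = R t (R (s - t) f) := by
    rw [← hR.add_apply ht.1 (sub_nonneg.2 hts), add_sub_cancel]
  rw [abs_of_nonneg (sub_nonneg.2 hts), hsplit, ← map_sub]
  exact (R t).le_of_opNorm_le (hM t ht) _

lemma IsSemigroup.isC0Semigroup_of_tendsto_zero (hR : IsSemigroup R)
    (hbdd : ∀ τ, ∃ M, ∀ s ∈ Set.Icc 0 τ, ‖R s‖ ≤ M)
    (hzero : ∀ f, Tendsto (fun t => R t f) (𝓝[≥] 0) (𝓝 f)) : IsC0Semigroup R := by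
  refine ⟨hR, fun f t ht => ?_⟩
  obtain ⟨M, hM⟩ := hbdd (t + 1)
  rw [ContinuousWithinAt, tendsto_iff_norm_sub_tendsto_zero]
  have habs : Tendsto (fun s => |s - t|) (𝓝[Set.Ici 0] t) (𝓝[≥] 0) :=
    tendsto_nhdsWithin_iff.2 ⟨(Continuous.tendsto' (by fun_prop) t 0
      (by rw [sub_self, abs_zero])).mono_left nhdsWithin_le_nhds,
      Eventually.of_forall fun s => Set.mem_Ici.2 (abs_nonneg _)⟩
  have hlim := (tendsto_iff_norm_sub_tendsto_zero.1 ((hzero f).comp habs)).const_mul M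
  rw [mul_zero] at hlim
  refine squeeze_zero' (Eventually.of_forall fun s => norm_nonneg _) ?_ hlim
  filter_upwards [self_mem_nhdsWithin, mem_nhdsWithin_of_mem_nhds (Iic_mem_nhds (lt_add_one t))]
    with s hs hst
  exact hR.norm_sub_le hM f ⟨hs, hst⟩ ⟨ht, (lt_add_one t).le⟩

lemma IsC0Semigroup.tendsto_zero (hR : IsC0Semigroup R) (f : E) :
    Tendsto (fun t => R t f) (𝓝[≥] 0) (𝓝 f) := by
  simpa only [hR.1.zero_apply] using (hR.2 f 0 Set.self_mem_Ici).tendsto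

end StrongConvergence

section DysonPhillips

variable {E : Type*} [NormedAddCommGroup E] [NormedSpace ℝ E] {T : ℝ → E →L[ℝ] E}

/-! ### The Dyson–Phillips series -/

/-- The terms of the Dyson–Phillips series of the perturbation of `T` by `B`, applied to `f`. -/
def dysonTerm (T : ℝ → E →L[ℝ] E) (B : E →L[ℝ] E) (f : E) : ℕ → ℝ → E
  | 0 => orbit T f
  | k + 1 => duhamel T fun s => B (dysonTerm T B f k s)

/-- The sum of the Dyson–Phillips series, extended by its value at `0` to negative times. -/
def dysonSum (T : ℝ → E →L[ℝ] E) (B : E →L[ℝ] E) (f : E) (t : ℝ) : E :=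
  ∑' k, dysonTerm T B f k (max t 0)

lemma norm_le_of_duhamel_iterate (B : E →L[ℝ] E) {τ M C : ℝ} (hM : ∀ s ∈ Set.Icc 0 τ, ‖T s‖ ≤ M)
    {v : ℕ → ℝ → E} (hv₀ : ∀ s ∈ Set.Icc 0 τ, ‖v 0 s‖ ≤ C)
    (hv : ∀ k, ∀ s ∈ Set.Icc 0 τ, v (k + 1) s = duhamel T (fun r => B (v k r)) s)
    (k : ℕ) {t : ℝ} (ht : t ∈ Set.Icc 0 τ) : ‖v k t‖ ≤ C * ((M * ‖B‖ * τ) ^ k / k.factorial) := by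
  have hτ : 0 ≤ τ := ht.1.trans ht.2
  have hM0 : 0 ≤ M := (norm_nonneg _).trans (hM 0 ⟨le_rfl, hτ⟩)
  have hC0 : 0 ≤ C := (norm_nonneg _).trans (hv₀ t ht)
  have hpointwise : ∀ s ∈ Set.Icc 0 τ, ‖v k s‖ ≤ (M * ‖B‖) ^ k * C * (s ^ k / k.factorial) := by
    induction k with
    | zero => simpa using hv₀
    | succ k ih =>
      intro s hs
      rw [hv k s hs]
      refine (norm_duhamel_le hM (C := ‖B‖ * ((M * ‖B‖) ^ k * C)) (fun r hr => ?_) hs).trans_eq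
        (by ring)
      rw [mul_assoc ‖B‖]
      exact B.le_opNorm_of_le (ih r hr)
  calc ‖v k t‖ ≤ (M * ‖B‖) ^ k * C * (t ^ k / k.factorial) := hpointwise t ht
    _ ≤ (M * ‖B‖) ^ k * C * (τ ^ k / k.factorial) := by gcongr; exacts [ht.1, ht.2]
    _ = C * ((M * ‖B‖ * τ) ^ k / k.factorial) := by ring

lemma norm_dysonTerm_le (B : E →L[ℝ] E) (f : E) {τ M : ℝ} (hM : ∀ s ∈ Set.Icc 0 τ, ‖T s‖ ≤ M)
    (k : ℕ) {t : ℝ} (ht : t ∈ Set.Icc 0 τ) :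
    ‖dysonTerm T B f k t‖ ≤ M * ‖f‖ * ((M * ‖B‖ * τ) ^ k / k.factorial) :=
  norm_le_of_duhamel_iterate B hM
    (fun _ hs => norm_orbit_le (ht.1.trans ht.2) hM f hs.2) (fun _ _ _ => rfl) k ht

lemma dysonTerm_smul (T : ℝ → E →L[ℝ] E) (B : E →L[ℝ] E) (c : ℝ) (f : E) (k : ℕ) (t : ℝ) :
    dysonTerm T B (c • f) k t = c • dysonTerm T B f k t := by
  induction k generalizing t with
  | zero => exact map_smul _ c f
  | succ k ih => simp only [dysonTerm, ih, map_smul, duhamel_smul]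

variable [CompleteSpace E]

lemma IsC0Semigroup.hasSum_duhamel (hT : IsC0Semigroup T) {g : ℕ → ℝ → E} {h : ℝ → E}
    (hg : ∀ k, Continuous (g k)) {t : ℝ} (ht : 0 ≤ t) {b : ℕ → ℝ} (hb : Summable b)
    (hgb : ∀ k, ∀ s ∈ Set.Icc 0 t, ‖g k s‖ ≤ b k)
    (hgh : ∀ s ∈ Set.Icc 0 t, HasSum (fun k => g k s) (h s)) :
    HasSum (fun k => duhamel T (g k) t) (duhamel T h t) := by
  obtain ⟨M, hM⟩ := hT.exists_norm_le t
  have hM0 : 0 ≤ M := (norm_nonneg _).trans (hM 0 ⟨le_rfl, ht⟩)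
  have hIcc : ∀ s ∈ Set.uIoc 0 t, s ∈ Set.Icc 0 t := fun s hs =>
    Set.Ioc_subset_Icc_self (Set.uIoc_of_le ht ▸ hs)
  refine intervalIntegral.hasSum_integral_of_dominated_convergence (bound := fun k _ => M * b k)
    (fun k => ((hT.continuous_duhamel_integrand (hg k)).comp
      (Continuous.prodMk_right t)).aestronglyMeasurable)
    (fun k => ae_of_all _ fun s hs => ?_) (ae_of_all _ fun _ _ => hb.mul_left M)
    intervalIntegrable_const
    (ae_of_all _ fun s hs => (hgh s (hIcc s hs)).mapL (T (max (t - s) 0)))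
  exact (norm_orbit_le ht hM (g k s) (sub_le_self t (hIcc s hs).1)).trans
    (mul_le_mul_of_nonneg_left (hgb k s (hIcc s hs)) hM0)

lemma IsC0Semigroup.continuous_dysonTerm (hT : IsC0Semigroup T) (B : E →L[ℝ] E) (f : E) (k : ℕ) :
    Continuous (dysonTerm T B f k) := by
  induction k with
  | zero => exact hT.continuous_orbit f
  | succ k ih => exact hT.continuous_duhamel (B.continuous.comp ih)

lemma IsC0Semigroup.dysonTerm_add (hT : IsC0Semigroup T) (B : E →L[ℝ] E) (f g : E) (k : ℕ) (t : ℝ) :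
    dysonTerm T B (f + g) k t = dysonTerm T B f k t + dysonTerm T B g k t := by
  induction k generalizing t with
  | zero => exact map_add _ f g
  | succ k ih =>
    simp only [dysonTerm, ih, map_add]
    exact hT.duhamel_add (B.continuous.comp (hT.continuous_dysonTerm B f k))
      (B.continuous.comp (hT.continuous_dysonTerm B g k)) t

lemma IsC0Semigroup.hasSum_dysonTerm (hT : IsC0Semigroup T) (B : E →L[ℝ] E) (f : E) (t : ℝ) :
    HasSum (fun k => dysonTerm T B f k (max t 0)) (dysonSum T B f t) := by
  obtain ⟨M, hM⟩ := hT.exists_norm_le (max t 0)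
  exact (Summable.of_norm_bounded ((Real.summable_pow_div_factorial _).mul_left _) fun k =>
    norm_dysonTerm_le B f hM k ⟨le_max_right _ _, le_rfl⟩).hasSum

lemma IsC0Semigroup.continuous_dysonSum (hT : IsC0Semigroup T) (B : E →L[ℝ] E) (f : E) :
    Continuous (dysonSum T B f) := by
  refine continuous_iff_continuousAt.2 fun t => ?_
  obtain ⟨M, hM⟩ := hT.exists_norm_le (max (t + 1) 0)
  have hcont : ContinuousOn (dysonSum T B f) (Set.Iic (t + 1)) :=
    continuousOn_tsum
      (fun k => ((hT.continuous_dysonTerm B f k).comp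
        (continuous_id.max continuous_const)).continuousOn)
      ((Real.summable_pow_div_factorial _).mul_left _)
      fun k s hs => norm_dysonTerm_le B f hM k ⟨le_max_right _ _, max_le_max_right 0 hs⟩
  exact hcont.continuousAt (Iic_mem_nhds (by linarith))

lemma IsC0Semigroup.dysonSum_eq (hT : IsC0Semigroup T) (B : E →L[ℝ] E) (f : E) {t : ℝ}
    (ht : 0 ≤ t) :
    dysonSum T B f t = T t f + duhamel T (fun s => B (dysonSum T B f s)) t := by
  obtain ⟨M, hM⟩ := hT.exists_norm_le t
  have htail : HasSum (fun k => dysonTerm T B f (k + 1) t)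
      (duhamel T (fun s => B (dysonSum T B f s)) t) := by
    refine hT.hasSum_duhamel (g := fun k s => B (dysonTerm T B f k s))
      (fun k => B.continuous.comp (hT.continuous_dysonTerm B f k)) ht
      (((Real.summable_pow_div_factorial _).mul_left (M * ‖f‖)).mul_left ‖B‖)
      (fun k s hs => B.le_opNorm_of_le (norm_dysonTerm_le B f hM k hs)) fun s hs => ?_
    simpa only [max_eq_left hs.1] using (hT.hasSum_dysonTerm B f s).mapL B
  have hsum := hT.hasSum_dysonTerm B f t
  rw [max_eq_left ht, ← hasSum_nat_add_iff' 1, Finset.sum_range_one] at hsum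
  rw [← hsum.unique htail, dysonTerm, orbit_of_nonneg T f ht, add_sub_cancel]

lemma IsC0Semigroup.eq_zero_of_eq_duhamel (hT : IsC0Semigroup T) (B : E →L[ℝ] E) {v : ℝ → E}
    (hv : Continuous v) (h : ∀ t, 0 ≤ t → v t = duhamel T (fun s => B (v s)) t) {t : ℝ}
    (ht : 0 ≤ t) : v t = 0 := by
  obtain ⟨M, hM⟩ := hT.exists_norm_le t
  obtain ⟨C, hC⟩ := (isCompact_Icc (a := 0) (b := t)).exists_bound_of_continuousOn hv.continuousOn
  have hlim : Tendsto (fun k : ℕ => C * ((M * ‖B‖ * t) ^ k / k.factorial)) atTop (𝓝 0) :=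
    ((Real.summable_pow_div_factorial _).mul_left C).tendsto_atTop_zero
  exact norm_le_zero_iff.1 (ge_of_tendsto' hlim fun k =>
    norm_le_of_duhamel_iterate B hM (v := fun _ => v) hC (fun _ s hs => h s hs.1) k ⟨ht, le_rfl⟩)

lemma IsC0Semigroup.eq_dysonSum (hT : IsC0Semigroup T) (B : E →L[ℝ] E) (f : E) {u : ℝ → E}
    (hu : Continuous u) (h : ∀ t, 0 ≤ t → u t = T t f + duhamel T (fun s => B (u s)) t) {t : ℝ}
    (ht : 0 ≤ t) : u t = dysonSum T B f t := by
  have hS := hT.continuous_dysonSum B f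
  have hBu : Continuous fun s => B (u s) := B.continuous.comp hu
  have hBS : Continuous fun s => B (dysonSum T B f s) := B.continuous.comp hS
  refine sub_eq_zero.1 (hT.eq_zero_of_eq_duhamel B (v := fun s => u s - dysonSum T B f s)
    (hu.sub hS) (fun s hs => ?_) ht)
  simp only [map_sub]
  rw [hT.duhamel_sub hBu hBS, h s hs, hT.dysonSum_eq B f hs, add_sub_add_left_eq_sub]

/-- The perturbation of a `C₀`-semigroup `T` by a bounded operator `B`, given by the
Dyson–Phillips series. -/
def IsC0Semigroup.dysonSemigroup (hT : IsC0Semigroup T) (B : E →L[ℝ] E) (t : ℝ) : E →L[ℝ] E :=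
  LinearMap.mkContinuousOfExistsBound
    { toFun f := dysonSum T B f t
      map_add' f g := by
        rw [← ((hT.hasSum_dysonTerm B f t).add (hT.hasSum_dysonTerm B g t)).tsum_eq]
        simp only [dysonSum, hT.dysonTerm_add]
      map_smul' c f := by
        rw [← ((hT.hasSum_dysonTerm B f t).const_smul (RingHom.id ℝ c)).tsum_eq]
        simp only [dysonSum, dysonTerm_smul, RingHom.id_apply] }
    (by
      obtain ⟨M, hM⟩ := hT.exists_norm_le (max t 0)
      let bound (k : ℕ) : ℝ := M * ((M * ‖B‖ * max t 0) ^ k / k.factorial)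
      have hbound : Summable bound := (Real.summable_pow_div_factorial _).mul_left M
      refine ⟨∑' k, bound k, fun f => tsum_of_norm_bounded (hbound.hasSum.mul_right ‖f‖)
        fun k => ?_⟩
      exact (norm_dysonTerm_le B f hM k ⟨le_max_right _ _, le_rfl⟩).trans_eq (mul_right_comm ..))

lemma IsC0Semigroup.dysonSemigroup_apply (hT : IsC0Semigroup T) (B : E →L[ℝ] E) (t : ℝ) (f : E) :
    hT.dysonSemigroup B t f = dysonSum T B f t := rfl

lemma IsC0Semigroup.dysonSum_add (hT : IsC0Semigroup T) (B : E →L[ℝ] E) (f : E) {r t : ℝ}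
    (hr : 0 ≤ r) (ht : 0 ≤ t) :
    dysonSum T B f (r + t) = dysonSum T B (dysonSum T B f t) r := by
  have hS := hT.continuous_dysonSum B f
  have hBS : Continuous fun s => B (dysonSum T B f s) := B.continuous.comp hS
  rw [add_comm]
  refine hT.eq_dysonSum B (dysonSum T B f t) (u := fun s => dysonSum T B f (t + s))
    (hS.comp (continuous_const_add t)) (fun s hs => ?_) hr
  calc dysonSum T B f (t + s)
      = T s (T t f) + (T s (duhamel T (fun r => B (dysonSum T B f r)) t)
          + duhamel T (fun r => B (dysonSum T B f (t + r))) s) := by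
        rw [add_comm, hT.dysonSum_eq B f (add_nonneg hs ht), hT.1.add_apply hs ht,
          hT.duhamel_time_add hBS hs ht]
    _ = T s (dysonSum T B f t) + duhamel T (fun r => B (dysonSum T B f (t + r))) s := by
        rw [hT.dysonSum_eq B f ht, map_add, add_assoc]

lemma IsC0Semigroup.isC0Semigroup_dysonSemigroup (hT : IsC0Semigroup T) (B : E →L[ℝ] E) :
    IsC0Semigroup (hT.dysonSemigroup B) := by
  refine ⟨⟨?_, fun r t hr ht => ?_⟩, fun f => (hT.continuous_dysonSum B f).continuousOn⟩
  · ext f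
    rw [hT.dysonSemigroup_apply, hT.dysonSum_eq B f le_rfl, hT.1.zero_apply, duhamel,
      intervalIntegral.integral_same, add_zero, ContinuousLinearMap.id_apply]
  · ext f
    exact hT.dysonSum_add B f hr ht

end DysonPhillips

section Generator

variable {E : Type*} [NormedAddCommGroup E] [NormedSpace ℝ E] {S S' T : ℝ → E →L[ℝ] E}

/-! ### Generators -/

lemma IsSemigroup.inGenerator_iff_hasDerivWithinAt (hT : IsSemigroup T) {f g : E} :
    InGenerator T f g ↔ HasDerivWithinAt (orbit T f) g (Set.Ici 0) 0 := by
  rw [← hasDerivWithinAt_Ioi_iff_Ici, hasDerivWithinAt_iff_tendsto_slope' (by simp)]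
  refine tendsto_congr' (eventually_nhdsWithin_of_forall fun t (ht : 0 < t) => ?_)
  rw [slope_def_module, orbit_of_nonneg T f ht.le, orbit_of_nonneg T f le_rfl, hT.zero_apply,
    sub_zero]

lemma IsC0Semigroup.inGenerator_apply (hT : IsC0Semigroup T) {f g : E} (h : InGenerator T f g)
    {r : ℝ} (hr : 0 ≤ r) : InGenerator T (T r f) (T r g) := by
  refine (((T r).continuous.tendsto _).comp h).congr' ?_
  filter_upwards [self_mem_nhdsWithin] with t ht
  have hcomm : T t (T r f) = T r (T t f) := by
    rw [← hT.1.add_apply (le_of_lt ht) hr, ← hT.1.add_apply hr (le_of_lt ht), add_comm]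
  simp only [Function.comp_apply, map_smul, map_sub, hcomm]

variable [CompleteSpace E]

lemma hasDerivWithinAt_intervalIntegral_zero {F : ℝ → ℝ → E}
    (hF : Continuous fun q : ℝ × ℝ => F q.1 q.2) :
    HasDerivWithinAt (fun t => ∫ s in (0 : ℝ)..t, F t s) (F 0 0) (Set.Ici 0) 0 := by
  have hcont : Continuous fun t => ∫ u in (0 : ℝ)..1, F t (t * u) :=
    intervalIntegral.continuous_parametric_intervalIntegral_of_continuous'
      (f := fun t u => F t (t * u)) (hF.comp (continuous_fst.prodMk continuous_mul)) 0 1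
  have hlim := (hcont.tendsto 0).mono_left (nhdsWithin_le_nhds (s := Set.Ioi 0))
  simp only [zero_mul, intervalIntegral.integral_const, sub_zero, one_smul] at hlim
  rw [← hasDerivWithinAt_Ioi_iff_Ici, hasDerivWithinAt_iff_tendsto_slope' (by simp)]
  refine hlim.congr' (eventually_nhdsWithin_of_forall fun t (ht : 0 < t) => ?_)
  have hsubst := intervalIntegral.smul_integral_comp_mul_left (a := 0) (b := 1) (F t) t
  rw [mul_zero, mul_one] at hsubst
  rw [slope_def_module, intervalIntegral.integral_same, sub_zero, sub_zero, ← hsubst,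
    inv_smul_smul₀ ht.ne']

lemma IsC0Semigroup.hasDerivWithinAt_duhamel_zero (hT : IsC0Semigroup T) {g : ℝ → E}
    (hg : Continuous g) : HasDerivWithinAt (duhamel T g) (g 0) (Set.Ici 0) 0 := by
  have h := hasDerivWithinAt_intervalIntegral_zero (F := fun t s => orbit T (g s) (t - s))
    (hT.continuous_duhamel_integrand hg)
  rwa [sub_self, orbit_of_nonneg T _ le_rfl, hT.1.zero_apply] at h

lemma IsC0Semigroup.inGenerator_integral (hT : IsC0Semigroup T) (f : E) {h : ℝ} (hh : 0 ≤ h) :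
    InGenerator T (∫ s in (0 : ℝ)..h, orbit T f s) (T h f - f) := by
  have hcont := hT.continuous_orbit f
  let F (x : ℝ) : E := ∫ s in (0 : ℝ)..x, orbit T f s
  have hF (x : ℝ) : HasDerivAt F (orbit T f x) x :=
    (hcont.integral_hasStrictDerivAt 0 x).hasDerivAt
  have hderiv : HasDerivAt (fun r => F (h + r) - F r) (T h f - f) 0 := by
    convert ((hF (h + 0)).comp_const_add h 0).fun_sub (hF 0) using 1
    rw [add_zero, orbit_of_nonneg T f hh, orbit_of_nonneg T f le_rfl, hT.1.zero_apply]
  have horbit (r : ℝ) (hr : 0 ≤ r) : orbit T (F h) r = F (h + r) - F r := by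
    have hshift := intervalIntegral.integral_comp_add_left (orbit T f) r (a := 0) (b := h)
    rw [add_zero, add_comm r h] at hshift
    rw [orbit_of_nonneg T _ hr, intervalIntegral.integral_interval_sub_left
      (hcont.intervalIntegrable _ _) (hcont.intervalIntegrable _ _), ← hshift,
      ← (T r).intervalIntegral_comp_comm (hcont.intervalIntegrable _ _)]
    refine intervalIntegral.integral_congr fun s hs => ?_
    exact (hT.1.orbit_add hr (Set.uIcc_of_le hh ▸ hs).1 f).symm
  exact hT.1.inGenerator_iff_hasDerivWithinAt.2
    (hderiv.hasDerivWithinAt.congr horbit (horbit 0 le_rfl))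

lemma IsC0Semigroup.tendsto_average (hT : IsC0Semigroup T) (f : E) :
    Tendsto (fun h : ℝ => h⁻¹ • ∫ s in (0 : ℝ)..h, orbit T f s) (𝓝[>] 0) (𝓝 f) := by
  have h := hasDerivWithinAt_intervalIntegral_zero (F := fun _ s => orbit T f s)
    ((hT.continuous_orbit f).comp continuous_snd)
  rw [orbit_of_nonneg T f le_rfl, hT.1.zero_apply, ← hasDerivWithinAt_Ioi_iff_Ici,
    hasDerivWithinAt_iff_tendsto_slope' (by simp)] at h
  refine h.congr fun t => ?_
  rw [slope_def_module, intervalIntegral.integral_same, sub_zero, sub_zero]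

lemma IsC0Semigroup.hasDerivWithinAt_interpolation (hS : IsC0Semigroup S) (hS' : IsC0Semigroup S')
    {f g : E} (hf : InGenerator S f g) (hf' : InGenerator S' f g) {τ : ℝ} (hτ : 0 < τ) :
    HasDerivWithinAt (fun r => orbit S' (orbit S f r) (τ - r)) 0 (Set.Ici 0) 0 := by
  rw [← hasDerivWithinAt_Ioi_iff_Ici, hasDerivWithinAt_iff_tendsto_slope' (by simp)]
  have hτr : Tendsto (fun r => τ - r) (𝓝[>] 0) (𝓝 τ) :=
    ((continuous_const.sub continuous_id).tendsto' 0 τ (sub_zero τ)).mono_left nhdsWithin_le_nhds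
  have hlim := (hS'.continuous_uncurry_orbit.tendsto (g - g, τ)).comp
    ((hf.sub hf').prodMk_nhds hτr)
  rw [sub_self, orbit, map_zero] at hlim
  refine hlim.congr' ?_
  filter_upwards [Ioo_mem_nhdsGT hτ] with r hr
  have hτr : 0 ≤ τ - r := sub_nonneg.2 hr.2.le
  have hsplit : S' τ f = S' (τ - r) (S' r f) := by
    rw [← hS'.1.add_apply hτr hr.1.le, sub_add_cancel]
  simp only [Function.comp_apply, slope_def_module, sub_zero, orbit_of_nonneg _ _ hr.1.le,
    orbit_of_nonneg _ _ hτr, orbit_of_nonneg _ _ hτ.le, orbit_of_nonneg _ _ le_rfl,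
    hS.1.zero_apply, hsplit]
  rw [← smul_sub, sub_sub_sub_cancel_right, map_smul, map_sub]

lemma IsC0Semigroup.apply_eq_of_inGenerator (hS : IsC0Semigroup S) (hS' : IsC0Semigroup S')
    (h : ∀ f g, InGenerator S f g → InGenerator S' f g) {f g : E} (hf : InGenerator S f g)
    {t : ℝ} (ht : 0 ≤ t) : S t f = S' t f := by
  let v (s : ℝ) : E := orbit S' (orbit S f s) (t - s)
  have hv : Continuous v := hS'.continuous_uncurry_orbit.comp
    ((hS.continuous_orbit f).prodMk (continuous_const.sub continuous_id))
  have hderiv : ∀ x ∈ Set.Ico 0 t, HasDerivWithinAt v 0 (Set.Ici x) x := by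
    intro x hx
    have hx' := hS.inGenerator_apply hf hx.1
    have hinterp := hS.hasDerivWithinAt_interpolation hS' hx' (h _ _ hx') (sub_pos.2 hx.2)
    rw [← sub_self x] at hinterp
    have hshift := hinterp.scomp x (h := fun y => y - x) (s := Set.Ici x)
      ((hasDerivAt_id x).sub_const x).hasDerivWithinAt fun y hy => sub_le_sub_right hy x
    rw [smul_zero] at hshift
    have hvy (y : ℝ) (hy : x ≤ y) :
        v y = orbit S' (orbit S (S x f) (y - x)) (t - x - (y - x)) := by
      rw [sub_sub_sub_cancel_right, orbit_of_nonneg S _ (sub_nonneg.2 hy),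
        ← hS.1.add_apply (sub_nonneg.2 hy) hx.1, sub_add_cancel,
        ← orbit_of_nonneg S f (hx.1.trans hy)]
    exact hshift.congr hvy (hvy x le_rfl)
  have hconst := constant_of_has_deriv_right_zero hv.continuousOn hderiv t ⟨ht, le_rfl⟩
  simpa only [v, sub_self, sub_zero, orbit_of_nonneg _ _ ht, orbit_of_nonneg _ _ le_rfl,
    hS.1.zero_apply, hS'.1.zero_apply] using hconst

lemma IsC0Semigroup.eq_of_inGenerator (hS : IsC0Semigroup S) (hS' : IsC0Semigroup S')
    (h : ∀ f g, InGenerator S f g → InGenerator S' f g) {t : ℝ} (ht : 0 ≤ t) : S t = S' t := by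
  ext f
  have havg := hS.tendsto_average f
  refine tendsto_nhds_unique (((S t).continuous.tendsto _).comp havg)
    ((((S' t).continuous.tendsto _).comp havg).congr' ?_)
  filter_upwards [self_mem_nhdsWithin] with r hr
  simp only [Function.comp_apply, map_smul]
  rw [hS.apply_eq_of_inGenerator hS' h (hS.inGenerator_integral f (le_of_lt hr)) ht]

end Generator

section Perturbation

variable {E : Type*} [NormedAddCommGroup E] [NormedSpace ℝ E] {R S S' T : ℝ → E →L[ℝ] E}
  {B C : E →L[ℝ] E}

/-! ### Bounded perturbations -/

/-- `S` is the `C₀`-semigroup generated by `A + B`, where `A` is the generator of `T`. -/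
def IsBoundedPerturbation (T S : ℝ → E →L[ℝ] E) (B : E →L[ℝ] E) : Prop :=
  IsC0Semigroup S ∧ ∀ f g, InGenerator S f g ↔ InGenerator T f (g - B f)

lemma IsBoundedPerturbation.refl (hT : IsC0Semigroup T) : IsBoundedPerturbation T T 0 :=
  ⟨hT, fun f g => by rw [_root_.zero_apply, sub_zero]⟩

lemma IsBoundedPerturbation.trans (hS : IsBoundedPerturbation T S B)
    (hR : IsBoundedPerturbation S R C) : IsBoundedPerturbation T R (B + C) :=
  ⟨hR.1, fun f g => by rw [hR.2, hS.2, _root_.add_apply, sub_sub, add_comm]⟩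

lemma IsBoundedPerturbation.symm (hT : IsC0Semigroup T) (hS : IsBoundedPerturbation T S B) :
    IsBoundedPerturbation S T (-B) :=
  ⟨hT, fun f g => by rw [hS.2, _root_.neg_apply, sub_neg_eq_add, add_sub_cancel_right]⟩

variable [CompleteSpace E]

lemma IsBoundedPerturbation.unique (hS : IsBoundedPerturbation T S B)
    (hS' : IsBoundedPerturbation T S' B) {t : ℝ} (ht : 0 ≤ t) : S t = S' t :=
  hS.1.eq_of_inGenerator hS'.1 (fun f g hfg => (hS'.2 f g).2 ((hS.2 f g).1 hfg)) ht

lemma IsC0Semigroup.isBoundedPerturbation_dysonSemigroup (hT : IsC0Semigroup T) (B : E →L[ℝ] E) :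
    IsBoundedPerturbation T (hT.dysonSemigroup B) B := by
  have hS := hT.isC0Semigroup_dysonSemigroup B
  refine ⟨hS, fun f g => ?_⟩
  have hcont : Continuous fun s => B (dysonSum T B f s) :=
    B.continuous.comp (hT.continuous_dysonSum B f)
  have hderiv : HasDerivWithinAt (duhamel T fun s => B (dysonSum T B f s)) (B f) (Set.Ici 0) 0 := by
    have h := hT.hasDerivWithinAt_duhamel_zero hcont
    rwa [← hT.dysonSemigroup_apply, hS.1.zero_apply] at h
  have heq (t : ℝ) (ht : 0 ≤ t) : orbit (hT.dysonSemigroup B) f t =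
      orbit T f t + duhamel T (fun s => B (dysonSum T B f s)) t := by
    rw [orbit_of_nonneg _ f ht, orbit_of_nonneg T f ht]
    exact hT.dysonSum_eq B f ht
  rw [hS.1.inGenerator_iff_hasDerivWithinAt, hT.1.inGenerator_iff_hasDerivWithinAt]
  refine ⟨fun h => (h.sub hderiv).congr (fun t ht => ?_) ?_, fun h => ?_⟩
  · exact eq_sub_of_add_eq (heq t ht).symm
  · exact eq_sub_of_add_eq (heq 0 le_rfl).symm
  · simpa only [sub_add_cancel] using (h.add hderiv).congr heq (heq 0 le_rfl)

lemma IsBoundedPerturbation.apply_eq_dysonSum (hT : IsC0Semigroup T)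
    (hS : IsBoundedPerturbation T S B) {t : ℝ} (ht : 0 ≤ t) (f : E) :
    S t f = dysonSum T B f t := by
  rw [hS.unique (hT.isBoundedPerturbation_dysonSemigroup B) ht, hT.dysonSemigroup_apply]

lemma IsBoundedPerturbation.apply_eq_duhamel (hT : IsC0Semigroup T)
    (hS : IsBoundedPerturbation T S B) {t : ℝ} (ht : 0 ≤ t) (f : E) :
    S t f = T t f + duhamel T (fun s => B (orbit S f s)) t := by
  rw [hS.apply_eq_dysonSum hT ht, hT.dysonSum_eq B f ht]
  congr 1
  refine duhamel_congr T ht fun s hs => ?_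
  rw [orbit_of_nonneg S f hs, hS.apply_eq_dysonSum hT hs]

end Perturbation

section Rescaling

variable {E : Type*} [NormedAddCommGroup E] [NormedSpace ℝ E] {T : ℝ → E →L[ℝ] E}

/-! ### Exponential rescaling -/

lemma IsC0Semigroup.exp_smul (hT : IsC0Semigroup T) (c : ℝ) :
    IsC0Semigroup fun t => Real.exp (c * t) • T t := by
  refine ⟨⟨?_, fun s t hs ht => ?_⟩, fun f => ?_⟩
  · simp only [mul_zero, Real.exp_zero, one_smul, hT.1.1]
  · simp only [hT.1.2 s t hs ht, mul_add, Real.exp_add, mul_comm (Real.exp (c * s)),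
      ContinuousLinearMap.smul_comp, ContinuousLinearMap.comp_smul, smul_smul]
  · exact (by fun_prop : Continuous fun t => Real.exp (c * t)).continuousOn.smul (hT.2 f)

lemma IsC0Semigroup.inGenerator_exp_smul (hT : IsC0Semigroup T) (c : ℝ) {f g : E}
    (h : InGenerator T f g) : InGenerator (fun t => Real.exp (c * t) • T t) f (g + c • f) := by
  rw [(hT.exp_smul c).1.inGenerator_iff_hasDerivWithinAt]
  have hexp : HasDerivAt (fun t => Real.exp (c * t)) c 0 := by
    simpa using ((hasDerivAt_id (0 : ℝ)).const_mul c).exp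
  have hprod := hexp.hasDerivWithinAt.fun_smul (hT.1.inGenerator_iff_hasDerivWithinAt.1 h)
  rw [mul_zero, Real.exp_zero, one_smul, orbit_of_nonneg T f le_rfl, hT.1.zero_apply] at hprod
  have heq (t : ℝ) (ht : 0 ≤ t) :
      orbit (fun t => Real.exp (c * t) • T t) f t = Real.exp (c * t) • orbit T f t := by
    rw [orbit_of_nonneg _ f ht, orbit_of_nonneg T f ht, _root_.smul_apply]
  exact hprod.congr heq (heq 0 le_rfl)

lemma IsC0Semigroup.isBoundedPerturbation_exp_smul (hT : IsC0Semigroup T) (c : ℝ) :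
    IsBoundedPerturbation T (fun t => Real.exp (c * t) • T t)
      (c • ContinuousLinearMap.id ℝ E) := by
  refine ⟨hT.exp_smul c, fun f g => ⟨fun h => ?_, fun h => ?_⟩⟩
  · have h' := (hT.exp_smul c).inGenerator_exp_smul (-c) h
    simp only [smul_smul, ← Real.exp_add, neg_mul, neg_add_cancel, Real.exp_zero, one_smul,
      neg_smul, ← sub_eq_add_neg] at h'
    exact h'
  · simpa only [_root_.smul_apply, ContinuousLinearMap.id_apply, sub_add_cancel] using
      hT.inGenerator_exp_smul c h

end Rescaling

section Order

variable {E : Type*} [NormedAddCommGroup E] [NormedSpace ℝ E] [PartialOrder E]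
  {B B' C : E →L[ℝ] E} {R S S' T T' : ℝ → E →L[ℝ] E}

/-! ### Order between operators and between families of operators -/

/-- The order `B ≤ C` between operators: `B f ≤ C f` for all `f ≥ 0`. Positivity of `B` is
`OpLE 0 B`. -/
def OpLE (B C : E →L[ℝ] E) : Prop := ∀ f, 0 ≤ f → B f ≤ C f

/-- Domination of operator families: `S t ≤ T t` for all `t ≥ 0`. Positivity of `S` is
`FamilyLE 0 S`. -/
def FamilyLE (S T : ℝ → E →L[ℝ] E) : Prop := ∀ t, 0 ≤ t → OpLE (S t) (T t)

lemma FamilyLE.refl (S : ℝ → E →L[ℝ] E) : FamilyLE S S := fun _ _ _ _ => le_rfl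

lemma TendstoStrongly.le_of_eventually_le [OrderClosedTopology E] {Q : ℕ → ℝ → E →L[ℝ] E}
    (hQ : TendstoStrongly Q R) (h : ∀ᶠ n in atTop, FamilyLE (Q n) T) : FamilyLE R T :=
  fun t ht f hf => le_of_tendsto (hQ t ht f) (h.mono fun _ hn => hn t ht f hf)

lemma TendstoStrongly.ge_of_eventually_ge [OrderClosedTopology E] {Q : ℕ → ℝ → E →L[ℝ] E}
    (hQ : TendstoStrongly Q R) (h : ∀ᶠ n in atTop, FamilyLE T (Q n)) : FamilyLE T R :=
  fun t ht f hf => ge_of_tendsto (hQ t ht f) (h.mono fun _ hn => hn t ht f hf)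

lemma FamilyLE.of_exp_smul [IsOrderedModule ℝ E] {c : ℝ}
    (h : FamilyLE (fun t => Real.exp (c * t) • S t) (fun t => Real.exp (c * t) • T t)) :
    FamilyLE S T := fun t ht f hf =>
  (smul_le_smul_iff_of_pos_left (Real.exp_pos (c * t))).1 (h t ht f hf)

variable [IsOrderedAddMonoid E]

lemma OpLE.monotone (hB : OpLE 0 B) : Monotone B := fun f g hfg => by
  rw [← sub_nonneg, ← map_sub]
  exact hB _ (sub_nonneg.2 hfg)

lemma OpLE.apply_le_apply (hBC : OpLE B C) (hB : OpLE 0 B) {f g : E} (hg : 0 ≤ g)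
    (hfg : f ≤ g) : B f ≤ C g :=
  (hB.monotone hfg).trans (hBC g hg)

variable [IsOrderedModule ℝ E] [OrderClosedTopology E]

lemma duhamel_nonneg (hT : FamilyLE 0 T) {g : ℝ → E} (hg : ∀ s, 0 ≤ s → 0 ≤ g s) {t : ℝ}
    (ht : 0 ≤ t) : 0 ≤ duhamel T g t := by
  rw [duhamel, intervalIntegral.integral_of_le ht]
  refine integral_nonneg_of_ae ?_
  filter_upwards [ae_restrict_mem measurableSet_Ioc] with s hs
  exact hT _ (le_max_right _ _) _ (hg s hs.1.le)

lemma dysonTerm_nonneg (hT : FamilyLE 0 T) (hB : OpLE 0 B) {f : E} (hf : 0 ≤ f) (k : ℕ)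
    {t : ℝ} (ht : 0 ≤ t) : 0 ≤ dysonTerm T B f k t := by
  induction k generalizing t with
  | zero => exact hT _ (le_max_right _ _) f hf
  | succ k ih => exact duhamel_nonneg hT (fun s hs => hB _ (ih hs)) ht

variable [CompleteSpace E]

lemma IsC0Semigroup.duhamel_mono (hT : IsC0Semigroup T) (hT' : IsC0Semigroup T') {g g' : ℝ → E}
    (hg : Continuous g) (hg' : Continuous g')
    (h : ∀ r s, 0 ≤ r → 0 ≤ s → T r (g s) ≤ T' r (g' s)) {t : ℝ} (ht : 0 ≤ t) :
    duhamel T g t ≤ duhamel T' g' t := by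
  rw [duhamel, duhamel, intervalIntegral.integral_of_le ht, intervalIntegral.integral_of_le ht]
  exact setIntegral_mono_on (hT.intervalIntegrable_duhamel hg t 0 t).1
    (hT'.intervalIntegrable_duhamel hg' t 0 t).1 measurableSet_Ioc
    fun s hs => h _ s (le_max_right _ _) hs.1.le

lemma IsC0Semigroup.dysonTerm_mono (hT : IsC0Semigroup T) (hT' : IsC0Semigroup T')
    (hTpos : FamilyLE 0 T) (hTT' : FamilyLE T T') (hB : OpLE 0 B) (hBB' : OpLE B B') {f : E}
    (hf : 0 ≤ f) (k : ℕ) {t : ℝ} (ht : 0 ≤ t) : dysonTerm T B f k t ≤ dysonTerm T' B' f k t := by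
  induction k generalizing t with
  | zero => exact hTT' _ (le_max_right _ _) f hf
  | succ k ih =>
    refine hT.duhamel_mono hT' (B.continuous.comp (hT.continuous_dysonTerm B f k))
      (B'.continuous.comp (hT'.continuous_dysonTerm B' f k)) (fun r s hr hs => ?_) ht
    have hterm := dysonTerm_nonneg hTpos hB hf k hs
    have hB'term := hBB'.apply_le_apply hB (hterm.trans (ih hs)) (ih hs)
    exact (hTT' r hr).apply_le_apply (hTpos r hr) ((hB _ hterm).trans hB'term) hB'term

lemma IsBoundedPerturbation.familyLE_of_nonneg (hT : IsC0Semigroup T) (hT' : IsC0Semigroup T')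
    (hTpos : FamilyLE 0 T) (hTT' : FamilyLE T T') (hS : IsBoundedPerturbation T S B)
    (hS' : IsBoundedPerturbation T' S' B') (hB : OpLE 0 B) (hBB' : OpLE B B') :
    FamilyLE S S' := fun t ht f hf => by
  rw [hS.apply_eq_dysonSum hT ht, hS'.apply_eq_dysonSum hT' ht]
  exact hasSum_le (fun k => hT.dysonTerm_mono hT' hTpos hTT' hB hBB' hf k (le_max_right t 0))
    (hT.hasSum_dysonTerm B f t) (hT'.hasSum_dysonTerm B' f t)

-- Rescaling both semigroups by `e^{ct}` adds `c` to both perturbations and makes them positive.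
lemma IsBoundedPerturbation.familyLE (hT : IsC0Semigroup T) (hT' : IsC0Semigroup T')
    (hTpos : FamilyLE 0 T) (hTT' : FamilyLE T T') (hS : IsBoundedPerturbation T S B)
    (hS' : IsBoundedPerturbation T' S' B') {c : ℝ}
    (hB : OpLE (-(c • ContinuousLinearMap.id ℝ E)) B) (hBB' : OpLE B B') : FamilyLE S S' := by
  refine .of_exp_smul (c := c) (familyLE_of_nonneg hT hT' hTpos hTT'
    (hS.trans (hS.1.isBoundedPerturbation_exp_smul c))
    (hS'.trans (hS'.1.isBoundedPerturbation_exp_smul c)) (fun f hf => ?_) fun f hf => ?_)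
  · exact neg_le_iff_add_nonneg.1 (hB f hf)
  · exact add_le_add_left (hBB' f hf) _

lemma IsBoundedPerturbation.nonneg (hT : IsC0Semigroup T) (hTpos : FamilyLE 0 T)
    (hS : IsBoundedPerturbation T S B) {c : ℝ}
    (hB : OpLE (-(c • ContinuousLinearMap.id ℝ E)) B) : FamilyLE 0 S := by
  have hle := familyLE hT hT hTpos (.refl T) (hT.isBoundedPerturbation_exp_smul (-c)) hS
    (c := c) (fun f _ => by rw [neg_smul]) (by rwa [neg_smul])
  exact fun t ht f hf => (smul_nonneg (Real.exp_pos _).le (hTpos t ht f hf)).trans (hle t ht f hf)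

/-- The map `s ↦ e^{t(A + sD)}` is convex for `D ≥ 0`, here between `-b`, `0` and `a`. -/
lemma IsBoundedPerturbation.add_smul_le {D : E →L[ℝ] E} {S₁ S₂ : ℝ → E →L[ℝ] E}
    (hT : IsC0Semigroup T) (hTpos : FamilyLE 0 T) (hD : OpLE 0 D) {a b : ℝ} (ha : 0 ≤ a)
    (hb : 0 ≤ b) (hS₁ : IsBoundedPerturbation T S₁ (-b • D))
    (hS₂ : IsBoundedPerturbation T S₂ (a • D)) (hle : FamilyLE S₁ S₂) {t : ℝ} (ht : 0 ≤ t)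
    {f : E} (hf : 0 ≤ f) : (a + b) • T t f ≤ a • S₁ t f + b • S₂ t f := by
  let I (S : ℝ → E →L[ℝ] E) : E := duhamel T (fun s => D (orbit S f s)) t
  have hI : I S₁ ≤ I S₂ := by
    refine hT.duhamel_mono hT (D.continuous.comp (hS₁.1.continuous_orbit f))
      (D.continuous.comp (hS₂.1.continuous_orbit f)) (fun r s hr _ => ?_) ht
    exact (hTpos r hr).monotone (hD.monotone (hle _ (le_max_right s 0) f hf))
  have h₁ : S₁ t f = T t f - b • I S₁ := by
    rw [hS₁.apply_eq_duhamel hT ht, sub_eq_add_neg, ← neg_smul]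
    simp only [_root_.smul_apply, duhamel_smul, I]
  have h₂ : S₂ t f = T t f + a • I S₂ := by
    rw [hS₂.apply_eq_duhamel hT ht]
    simp only [_root_.smul_apply, duhamel_smul, I]
  calc (a + b) • T t f ≤ (a + b) • T t f + (a * b) • (I S₂ - I S₁) :=
        le_add_of_nonneg_right (smul_nonneg (mul_nonneg ha hb) (sub_nonneg.2 hI))
    _ = a • S₁ t f + b • S₂ t f := by rw [h₁, h₂]; module

end Order

section BanachLattice

variable {E : Type*} [NormedAddCommGroup E] [Lattice E]

/-! ### Banach lattices -/

/-- Order continuity of the norm of a Banach lattice, in its equivalent sequential form: every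
decreasing sequence of positive elements converges. -/
def HasOrderContinuousNorm (E : Type*) [NormedAddCommGroup E] [Lattice E] : Prop :=
  ∀ u : ℕ → E, Antitone u → (∀ n, 0 ≤ u n) → ∃ g, Tendsto u atTop (𝓝 g)

lemma tendsto_of_le_of_le [IsOrderedAddMonoid E] [HasSolidNorm E] {ι : Type*}
    {l : Filter ι} {a b c : ι → E} {f : E} (ha : Tendsto a l (𝓝 f)) (hc : Tendsto c l (𝓝 f))
    (hab : ∀ᶠ i in l, a i ≤ b i) (hbc : ∀ᶠ i in l, b i ≤ c i) : Tendsto b l (𝓝 f) := by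
  have hdiff : Tendsto (fun i => b i - a i) l (𝓝 0) := by
    have hca := (hc.sub ha).norm
    rw [sub_self, norm_zero] at hca
    refine squeeze_zero_norm' ?_ hca
    filter_upwards [hab, hbc] with i hi hi'
    refine norm_le_norm_of_abs_le_abs ?_
    rw [abs_of_nonneg (sub_nonneg.2 hi), abs_of_nonneg (sub_nonneg.2 (hi.trans hi'))]
    exact sub_le_sub_right hi' _
  simpa only [add_sub_cancel, add_zero] using ha.add hdiff

variable [NormedSpace ℝ E] [IsOrderedAddMonoid E] {L R T : ℝ → E →L[ℝ] E}

lemma tendsto_apply_of_nonneg {ι : Type*} {l : Filter ι} {B : ι → E →L[ℝ] E} {C : E →L[ℝ] E}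
    (h : ∀ f, 0 ≤ f → Tendsto (fun i => B i f) l (𝓝 (C f))) (f : E) :
    Tendsto (fun i => B i f) l (𝓝 (C f)) := by
  have hparts := (h f⁺ (posPart_nonneg f)).sub (h f⁻ (negPart_nonneg f))
  simpa only [← map_sub, posPart_sub_negPart] using hparts

lemma HasOrderContinuousNorm.exists_tendstoStrongly [CompleteSpace E] {Q : ℕ → ℝ → E →L[ℝ] E}
    (hE : HasOrderContinuousNorm E) (hQ : ∀ n, FamilyLE 0 (Q n))
    (hanti : ∀ m n, m ≤ n → FamilyLE (Q n) (Q m)) : ∃ R, TendstoStrongly Q R := by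
  have hlim (t : ℝ) (ht : 0 ≤ t) : ∃ R : E →L[ℝ] E, ∀ f,
      Tendsto (fun n => Q n t f) atTop (𝓝 (R f)) := by
    have hpos (f : E) (hf : 0 ≤ f) : ∃ g, Tendsto (fun n => Q n t f) atTop (𝓝 g) :=
      hE _ (fun m n hmn => hanti m n hmn t ht f hf) fun n => hQ n t ht f hf
    have hall (f : E) : ∃ g, Tendsto (fun n => Q n t f) atTop (𝓝 g) := by
      obtain ⟨g₁, hg₁⟩ := hpos f⁺ (posPart_nonneg f)
      obtain ⟨g₂, hg₂⟩ := hpos f⁻ (negPart_nonneg f)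
      exact ⟨g₁ - g₂, by simpa only [← map_sub, posPart_sub_negPart] using hg₁.sub hg₂⟩
    choose R hR using hall
    exact ⟨continuousLinearMapOfTendsto (fun n => Q n t) (tendsto_pi_nhds.2 hR), hR⟩
  choose! R hR using hlim
  exact ⟨R, hR⟩

variable [HasSolidNorm E]

lemma OpLE.opNorm_le {B C : E →L[ℝ] E} (hB : OpLE 0 B) (hBC : OpLE B C) : ‖B‖ ≤ ‖C‖ := by
  refine B.opNorm_le_bound (norm_nonneg C) fun f => ?_
  have habs : |B f| ≤ |C (|f|)| := by
    refine (abs_le'.2 ⟨hB.monotone (le_abs_self f), ?_⟩).trans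
      ((hBC _ (abs_nonneg f)).trans (le_abs_self _))
    rw [← map_neg]
    exact hB.monotone (neg_le_abs f)
  rw [← norm_abs_eq_norm f]
  exact (norm_le_norm_of_abs_le_abs habs).trans (C.le_opNorm _)

lemma IsSemigroup.isC0Semigroup_of_le_of_le [CompleteSpace E] (hR : IsSemigroup R)
    (hRpos : FamilyLE 0 R) (hT : IsC0Semigroup T) (hRT : FamilyLE R T) (hLR : FamilyLE L R)
    (hL : ∀ f, Tendsto (fun t => L t f) (𝓝[≥] 0) (𝓝 f)) : IsC0Semigroup R := by
  refine hR.isC0Semigroup_of_tendsto_zero (fun τ => ?_) fun f => ?_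
  · obtain ⟨M, hM⟩ := hT.exists_norm_le τ
    exact ⟨M, fun s hs => ((hRpos s hs.1).opNorm_le (hRT s hs.1)).trans (hM s hs)⟩
  · refine tendsto_apply_of_nonneg (C := ContinuousLinearMap.id ℝ E) (fun f hf => ?_) f
    exact tendsto_of_le_of_le (hL f) (hT.tendsto_zero f)
      (eventually_nhdsWithin_of_forall fun t ht => hLR t ht f hf)
      (eventually_nhdsWithin_of_forall fun t ht => hRT t ht f hf)

end BanachLattice

section LpOrder

variable {Ω : Type*} [MeasurableSpace Ω] {μ : Measure Ω} {p : ℝ≥0∞}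

/-! ### The Banach lattice `Lp` -/

instance {E : Type*} [NormedAddCommGroup E] [NormedSpace ℝ E] [Lattice E]
    [IsOrderedAddMonoid E] [IsOrderedModule ℝ E] : IsOrderedModule ℝ (Lp E p μ) :=
  .of_smul_nonneg fun a ha f hf => by
    rw [← Lp.coeFn_nonneg] at hf ⊢
    filter_upwards [hf, Lp.coeFn_smul a f] with ω hω hsmul
    rw [hsmul]
    exact smul_nonneg ha hω

variable [Fact (1 ≤ p)]

lemma toReal_pos_of_one_le (hp : p ≠ ∞) : 0 < p.toReal :=
  ENNReal.toReal_pos (zero_lt_one.trans_le Fact.out).ne' hp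

lemma Lp_enorm_rpow_eq_lintegral {F : Type*} [NormedAddCommGroup F] (hp : p ≠ ∞) (f : Lp F p μ) :
    ‖f‖ₑ ^ p.toReal = ∫⁻ ω, ‖f ω‖ₑ ^ p.toReal ∂μ := by
  have hpos := ENNReal.toReal_pos_iff.1 (toReal_pos_of_one_le hp)
  rw [Lp.enorm_def, eLpNorm_eq_lintegral_rpow_enorm_toReal hpos.1.ne' hp, ← ENNReal.rpow_mul,
    one_div, inv_mul_cancel₀ (toReal_pos_of_one_le hp).ne', ENNReal.rpow_one]

lemma norm_rpow_add_le_norm_add_rpow (hp : p ≠ ∞) {f g : Lp ℝ p μ} (hf : 0 ≤ f) (hg : 0 ≤ g) :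
    ‖f‖ ^ p.toReal + ‖g‖ ^ p.toReal ≤ ‖f + g‖ ^ p.toReal := by
  have hp1 : 1 ≤ p.toReal := (ENNReal.dichotomy p).resolve_left hp
  have hofReal (h : Lp ℝ p μ) : ENNReal.ofReal (‖h‖ ^ p.toReal) = ‖h‖ₑ ^ p.toReal := by
    rw [← ENNReal.ofReal_rpow_of_nonneg (norm_nonneg _) (by positivity), ofReal_norm]
  rw [← ENNReal.ofReal_le_ofReal_iff (by positivity),
    ENNReal.ofReal_add (by positivity) (by positivity), hofReal, hofReal, hofReal,
    Lp_enorm_rpow_eq_lintegral hp, Lp_enorm_rpow_eq_lintegral hp, Lp_enorm_rpow_eq_lintegral hp,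
    ← lintegral_add_right' _ ((Lp.aestronglyMeasurable g).enorm.pow_const _)]
  refine lintegral_mono_ae ?_
  filter_upwards [(Lp.coeFn_nonneg f).2 hf, (Lp.coeFn_nonneg g).2 hg, Lp.coeFn_add f g]
    with ω hfω hgω hadd
  rw [hadd, Pi.add_apply, Real.enorm_of_nonneg hfω, Real.enorm_of_nonneg hgω,
    Real.enorm_of_nonneg (add_nonneg hfω hgω), ENNReal.ofReal_add hfω hgω]
  exact ENNReal.add_rpow_le_rpow_add _ _ hp1

/-- By superadditivity of `‖·‖ ^ p`, the norms of a decreasing sequence control its increments. -/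
lemma hasOrderContinuousNorm_Lp (hp : p ≠ ∞) : HasOrderContinuousNorm (Lp ℝ p μ) := by
  intro u hu hu0
  have hp0 := toReal_pos_of_one_le hp
  let a (n : ℕ) : ℝ := ‖u n‖ ^ p.toReal
  have hincr (m n : ℕ) (hmn : m ≤ n) : ‖u m - u n‖ ^ p.toReal ≤ a m - a n := by
    have h := norm_rpow_add_le_norm_add_rpow hp (sub_nonneg.2 (hu hmn)) (hu0 n)
    rw [sub_add_cancel] at h
    exact le_sub_iff_add_le.2 h
  have ha : Antitone a := fun m n hmn =>
    sub_nonneg.1 ((Real.rpow_nonneg (norm_nonneg _) _).trans (hincr m n hmn))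
  have hbdd : BddBelow (Set.range a) :=
    ⟨0, Set.forall_mem_range.2 fun n => Real.rpow_nonneg (norm_nonneg _) _⟩
  refine cauchySeq_tendsto_of_complete (Metric.cauchySeq_iff'.2 fun ε hε => ?_)
  obtain ⟨N, hN⟩ := Metric.cauchySeq_iff'.1 (tendsto_atTop_ciInf ha hbdd).cauchySeq
    (ε ^ p.toReal) (Real.rpow_pos_of_pos hε _)
  refine ⟨N, fun n hn => ?_⟩
  rw [dist_comm, dist_eq_norm, ← Real.rpow_lt_rpow_iff (norm_nonneg _) hε.le hp0]
  calc ‖u N - u n‖ ^ p.toReal ≤ a N - a n := hincr N n hn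
    _ ≤ dist (a n) (a N) := by rw [dist_comm]; exact le_abs_self _
    _ < ε ^ p.toReal := hN n hn

end LpOrder

section Multiplication

variable {Ω : Type*} [MeasurableSpace Ω] {μ : Measure Ω}

/-! ### Multiplication operators -/

lemma LocallyMeasurable.measurable_comp {α β : Type*} [MeasurableSpace α] [MeasurableSpace β]
    {V : Ω → α} (hV : LocallyMeasurable μ V) {φ : α → β} (hφ : Measurable φ) :
    LocallyMeasurable μ fun ω => φ (V ω) := fun B hB hμB => by
  obtain ⟨g, hg, hVg⟩ := hV B hB hμB
  exact ⟨fun ω => φ (g ω), hφ.comp hg, hVg.mono fun ω hω => congrArg φ hω⟩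

lemma LocallyMeasurable.prodMk {α β : Type*} [MeasurableSpace α] [MeasurableSpace β]
    {V : Ω → α} {W : Ω → β} (hV : LocallyMeasurable μ V) (hW : LocallyMeasurable μ W) :
    LocallyMeasurable μ fun ω => (V ω, W ω) := fun B hB hμB => by
  obtain ⟨g, hg, hVg⟩ := hV B hB hμB
  obtain ⟨h, hh, hWh⟩ := hW B hB hμB
  exact ⟨fun ω => (g ω, h ω), hg.prodMk hh, hVg.mp (hWh.mono fun ω hω hω' => Prod.ext hω' hω)⟩

lemma LocallyMeasurable.const {α : Type*} [MeasurableSpace α] (a : α) :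
    LocallyMeasurable μ fun _ : Ω => a :=
  fun _ _ _ => ⟨fun _ => a, measurable_const, ae_of_all _ fun _ => rfl⟩

/-- The bounded locally measurable functions, which act on `Lp` by multiplication. -/
def boundedRates (μ : Measure Ω) : Submodule ℝ (Ω → ℝ) where
  carrier := {W | LocallyMeasurable μ W ∧ ∃ c, ∀ ω, |W ω| ≤ c}
  zero_mem' := ⟨.const 0, 0, fun _ => abs_zero.le⟩
  add_mem' := by
    rintro W W' ⟨hW, c, hc⟩ ⟨hW', c', hc'⟩
    exact ⟨(hW.prodMk hW').measurable_comp measurable_add, c + c',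
      fun ω => (abs_add_le _ _).trans (add_le_add (hc ω) (hc' ω))⟩
  smul_mem' := by
    rintro a W ⟨hW, c, hc⟩
    exact ⟨hW.measurable_comp (measurable_const_mul a), |a| * c,
      fun ω => (abs_mul _ _).trans_le (mul_le_mul_of_nonneg_left (hc ω) (abs_nonneg a))⟩

variable {p : ℝ≥0∞}

lemma ae_norm_mul_le {W : Ω → ℝ} {c : ℝ} (hc : ∀ ω, |W ω| ≤ c) (f : Lp ℝ p μ) :
    ∀ᵐ ω ∂μ, ‖W ω * f ω‖ ≤ c * ‖f ω‖ := ae_of_all _ fun ω =>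
  (norm_mul _ _).trans_le (mul_le_mul_of_nonneg_right (hc ω) (norm_nonneg _))

variable [Fact (1 ≤ p)]

-- `W` need not be measurable, but `f` is a limit of simple functions with supports of finite
-- measure, on which `W` agrees with a measurable function.
lemma LocallyMeasurable.aestronglyMeasurable_mul (hp : p ≠ ∞) {W : Ω → ℝ}
    (hW : LocallyMeasurable μ W) (f : Lp ℝ p μ) :
    AEStronglyMeasurable (fun ω => W ω * f ω) μ := by
  obtain ⟨s, hs, hlim⟩ := Lp.finStronglyMeasurable f (zero_lt_one.trans_le Fact.out).ne' hp
  refine aestronglyMeasurable_of_tendsto_ae atTop (f := fun n ω => W ω * s n ω) (fun n => ?_)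
    (ae_of_all _ fun ω => (hlim ω).const_mul (W ω))
  obtain ⟨g, hg, hWg⟩ := hW _ (s n).measurableSet_support (hs n)
  rw [ae_restrict_iff' (s n).measurableSet_support] at hWg
  refine ⟨fun ω => g ω * s n ω, (hg.mul (s n).measurable).stronglyMeasurable, ?_⟩
  filter_upwards [hWg] with ω hω
  by_cases hsω : s n ω = 0
  · simp only [hsω, mul_zero]
  · rw [hω hsω]

lemma memLp_mul (hp : p ≠ ∞) (W : boundedRates μ) (f : Lp ℝ p μ) :
    MemLp (fun ω => (W : Ω → ℝ) ω * f ω) p μ := by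
  obtain ⟨hW, c, hc⟩ := W.2
  exact .of_le_mul (Lp.memLp f) (hW.aestronglyMeasurable_mul hp f) (ae_norm_mul_le hc f)

/-- The operator on `Lp` of multiplication by a bounded locally measurable function. -/
def mulOp (hp : p ≠ ∞) : boundedRates μ →ₗ[ℝ] Lp ℝ p μ →L[ℝ] Lp ℝ p μ where
  toFun W := LinearMap.mkContinuousOfExistsBound
    { toFun f := (memLp_mul hp W f).toLp _
      map_add' f g := by
        rw [← MemLp.toLp_add, MemLp.toLp_eq_toLp_iff]
        filter_upwards [Lp.coeFn_add f g] with ω hω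
        simp only [hω, Pi.add_apply, mul_add]
      map_smul' c f := by
        rw [RingHom.id_apply, ← MemLp.toLp_const_smul, MemLp.toLp_eq_toLp_iff]
        filter_upwards [Lp.coeFn_smul c f] with ω hω
        simp only [hω, Pi.smul_apply, mul_smul_comm] }
    (by
      obtain ⟨-, c, hc⟩ := W.2
      refine ⟨c, fun f => Lp.norm_le_mul_norm_of_ae_le_mul ?_⟩
      filter_upwards [(memLp_mul hp W f).coeFn_toLp, ae_norm_mul_le hc f] with ω hω hle
      exact (congrArg norm hω).trans_le hle)
  map_add' W W' := by
    ext1 f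
    exact (MemLp.toLp_congr (memLp_mul hp (W + W') f)
      ((memLp_mul hp W f).add (memLp_mul hp W' f)) (ae_of_all _ fun ω => add_mul _ _ _)).trans
      (MemLp.toLp_add (memLp_mul hp W f) (memLp_mul hp W' f))
  map_smul' a W := by
    ext1 f
    exact (MemLp.toLp_congr (memLp_mul hp (a • W) f) ((memLp_mul hp W f).const_smul a)
      (ae_of_all _ fun ω => mul_assoc _ _ _)).trans (MemLp.toLp_const_smul a (memLp_mul hp W f))

lemma coeFn_mulOp (hp : p ≠ ∞) (W : boundedRates μ) (f : Lp ℝ p μ) :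
    ⇑(mulOp hp W f) =ᵐ[μ] fun ω => (W : Ω → ℝ) ω * f ω :=
  (memLp_mul hp W f).coeFn_toLp

lemma mulOp_nonneg (hp : p ≠ ∞) {W : boundedRates μ} (hW : 0 ≤ (W : Ω → ℝ)) :
    OpLE 0 (mulOp (p := p) hp W) := fun f hf => by
  rw [_root_.zero_apply, ← Lp.coeFn_nonneg]
  filter_upwards [coeFn_mulOp hp W f, (Lp.coeFn_nonneg f).2 hf] with ω hω hfω
  rw [hω]
  exact mul_nonneg (hW ω) hfω

lemma mulOp_mono (hp : p ≠ ∞) {W W' : boundedRates μ} (hW : (W : Ω → ℝ) ≤ W') :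
    OpLE (mulOp (p := p) hp W) (mulOp hp W') := fun f hf => by
  rw [← sub_nonneg, ← _root_.sub_apply, ← map_sub]
  exact mulOp_nonneg hp (sub_nonneg.2 hW : 0 ≤ (W' - W : Ω → ℝ)) f hf

lemma exists_neg_smul_id_le_mulOp (hp : p ≠ ∞) (W : boundedRates μ) :
    ∃ c : ℝ, OpLE (-(c • ContinuousLinearMap.id ℝ (Lp ℝ p μ))) (mulOp hp W) := by
  obtain ⟨-, c, hc⟩ := W.2
  refine ⟨c, fun f hf => ?_⟩
  rw [_root_.neg_apply, neg_le_iff_add_nonneg, ← Lp.coeFn_nonneg]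
  filter_upwards [coeFn_mulOp hp W f, (Lp.coeFn_nonneg f).2 hf, Lp.coeFn_smul c f,
    Lp.coeFn_add (mulOp hp W f) (c • f)] with ω hω hfω hsmul hadd
  change 0 ≤ (mulOp hp W f + c • f : Lp ℝ p μ) ω
  rw [hadd, Pi.add_apply, hω, hsmul, Pi.smul_apply, smul_eq_mul, ← add_mul]
  exact mul_nonneg (neg_le_iff_add_nonneg.1 (neg_le_of_abs_le (hc ω))) hfω

lemma isPerturbedSG_iff (hp : p ≠ ∞) {T S : ℝ → Lp ℝ p μ →L[ℝ] Lp ℝ p μ} (W : boundedRates μ) :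
    IsPerturbedSG μ p T S W ↔ IsBoundedPerturbation T S (mulOp hp (-W)) := by
  refine and_congr_right fun _ => forall₂_congr fun f g => iff_congr .rfl ?_
  have hae (g₀ : Lp ℝ p μ) :
      ⇑g =ᵐ[μ] (fun ω => g₀ ω - (W : Ω → ℝ) ω * f ω) ↔ g₀ = g - mulOp hp (-W) f := by
    rw [map_neg, _root_.neg_apply, sub_neg_eq_add, ← sub_eq_iff_eq_add, eq_comm, Lp.ext_iff]
    refine ⟨fun h => ?_, fun h => ?_⟩ <;>
    filter_upwards [h, coeFn_mulOp hp W f, Lp.coeFn_sub g₀ (mulOp hp W f)] with ω hω hmul hsub <;>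
    simpa only [hsub, Pi.sub_apply, hmul] using hω
  simp only [hae, exists_eq_right]

end Multiplication

section BoundedAbsorption

variable {Ω : Type*} [MeasurableSpace Ω] {μ : Measure Ω} {p : ℝ≥0∞} [Fact (1 ≤ p)]
  {R S S' T T' : ℝ → Lp ℝ p μ →L[ℝ] Lp ℝ p μ} {W W' : boundedRates μ}

/-! ### Bounded absorption rates -/

lemma IsPerturbedSG.trans (hp : p ≠ ∞) (hS : IsPerturbedSG μ p T S W)
    (hR : IsPerturbedSG μ p S R W') : IsPerturbedSG μ p T R (W + W' : boundedRates μ) := by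
  rw [isPerturbedSG_iff hp] at hS hR ⊢
  rw [neg_add, map_add]
  exact hS.trans hR

lemma IsPerturbedSG.symm (hp : p ≠ ∞) (hT : IsC0Semigroup T) (hS : IsPerturbedSG μ p T S W) :
    IsPerturbedSG μ p S T (-W : boundedRates μ) := by
  rw [isPerturbedSG_iff hp] at hS ⊢
  rw [map_neg _ (-W)]
  exact hS.symm hT

lemma IsPerturbedSG.zero (hp : p ≠ ∞) (hT : IsC0Semigroup T) :
    IsPerturbedSG μ p T T (0 : boundedRates μ) := by
  rw [isPerturbedSG_iff hp, neg_zero, map_zero]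
  exact .refl hT

lemma IsC0Semigroup.exists_isPerturbedSG (hp : p ≠ ∞) (hT : IsC0Semigroup T)
    (W : boundedRates μ) : ∃ S, IsPerturbedSG μ p T S W :=
  ⟨_, (isPerturbedSG_iff hp W).2 (hT.isBoundedPerturbation_dysonSemigroup _)⟩

lemma IsPerturbedSG.nonneg (hp : p ≠ ∞) (hT : IsC0Semigroup T) (hTpos : FamilyLE 0 T)
    (hS : IsPerturbedSG μ p T S W) : FamilyLE 0 S := by
  obtain ⟨c, hc⟩ := exists_neg_smul_id_le_mulOp (p := p) hp (-W)
  exact ((isPerturbedSG_iff hp W).1 hS).nonneg hT hTpos hc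

lemma IsPerturbedSG.familyLE (hp : p ≠ ∞) (hT : IsC0Semigroup T) (hT' : IsC0Semigroup T')
    (hTpos : FamilyLE 0 T) (hTT' : FamilyLE T T') (hS : IsPerturbedSG μ p T S W)
    (hS' : IsPerturbedSG μ p T' S' W') (hW : (W' : Ω → ℝ) ≤ W) : FamilyLE S S' := by
  obtain ⟨c, hc⟩ := exists_neg_smul_id_le_mulOp (p := p) hp (-W)
  exact ((isPerturbedSG_iff hp W).1 hS).familyLE hT hT' hTpos hTT'
    ((isPerturbedSG_iff hp W').1 hS') hc (mulOp_mono hp (neg_le_neg hW))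

lemma IsPerturbedSG.add_smul_le (hp : p ≠ ∞) (hT : IsC0Semigroup T) (hTpos : FamilyLE 0 T)
    (hW : 0 ≤ (W : Ω → ℝ)) {a b : ℝ} (ha : 0 ≤ a) (hb : 0 ≤ b)
    (hS : IsPerturbedSG μ p T S (b • W : boundedRates μ))
    (hS' : IsPerturbedSG μ p T S' (-(a • W) : boundedRates μ)) {t : ℝ} (ht : 0 ≤ t)
    {f : Lp ℝ p μ} (hf : 0 ≤ f) : (a + b) • T t f ≤ a • S t f + b • S' t f := by
  have hle : FamilyLE S S' := hS.familyLE hp hT hT hTpos (.refl T) hS' fun ω =>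
    (neg_nonpos.2 (mul_nonneg ha (hW ω))).trans (mul_nonneg hb (hW ω))
  rw [isPerturbedSG_iff hp] at hS hS'
  rw [map_neg, map_smul, ← neg_smul] at hS
  rw [neg_neg, map_smul] at hS'
  exact hS.add_smul_le hT hTpos (mulOp_nonneg hp hW) ha hb hS' hle ht hf

end BoundedAbsorption

section Truncation

variable {Ω : Type*} {V W : Ω → ℝ≥0∞}

/-! ### Truncations -/

lemma trunc_nonneg (V : Ω → ℝ≥0∞) (n : ℕ) : 0 ≤ trunc V n := fun _ => ENNReal.toReal_nonneg

lemma trunc_le (V : Ω → ℝ≥0∞) (n : ℕ) (ω : Ω) : trunc V n ω ≤ n :=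
  ENNReal.toReal_le_of_le_ofReal n.cast_nonneg
    ((min_le_right _ _).trans_eq (ENNReal.ofReal_natCast n).symm)

lemma min_natCast_ne_top (v : ℝ≥0∞) (n : ℕ) : min v n ≠ ∞ :=
  ne_top_of_le_ne_top (ENNReal.natCast_ne_top n) (min_le_right _ _)

lemma trunc_mono (V : Ω → ℝ≥0∞) : Monotone (trunc V) := fun _ _ hmn _ =>
  ENNReal.toReal_mono (min_natCast_ne_top _ _) (min_le_min_left _ (Nat.cast_le.2 hmn))

lemma trunc_add_trunc_le (V W : Ω → ℝ≥0∞) (m n : ℕ) :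
    trunc V m + trunc W n ≤ trunc (V + W) (m + n) := fun ω => by
  rw [Pi.add_apply, trunc, trunc,
    ← ENNReal.toReal_add (min_natCast_ne_top _ _) (min_natCast_ne_top _ _)]
  refine ENNReal.toReal_mono (min_natCast_ne_top _ _) (le_min ?_ ?_)
  · exact add_le_add (min_le_left _ _) (min_le_left _ _)
  · rw [Nat.cast_add]
    exact add_le_add (min_le_right _ _) (min_le_right _ _)

lemma smul_trunc_apply {c : ℝ} (hc : 0 ≤ c) (V : Ω → ℝ≥0∞) (n : ℕ) (ω : Ω) :
    (c • trunc V n) ω = (min (smulRate c V ω) (ENNReal.ofReal (c * n))).toReal := by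
  rw [Pi.smul_apply, smul_eq_mul, trunc, smulRate, ENNReal.ofReal_mul hc, ENNReal.ofReal_natCast,
    ← mul_min_of_nonneg _ _ zero_le, ENNReal.toReal_mul, ENNReal.toReal_ofReal hc]

lemma trunc_smulRate_le_smul_trunc {c : ℝ} (hc : 0 ≤ c) (V : Ω → ℝ≥0∞) {m n : ℕ}
    (hmn : m ≤ c * n) : trunc (smulRate c V) m ≤ c • trunc V n := fun ω => by
  rw [smul_trunc_apply hc]
  refine ENNReal.toReal_mono (ne_top_of_le_ne_top ENNReal.ofReal_ne_top (min_le_right _ _))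
    (min_le_min_left _ ?_)
  rw [← ENNReal.ofReal_natCast]
  exact ENNReal.ofReal_le_ofReal hmn

lemma smul_trunc_le_trunc_smulRate {c : ℝ} (hc : 0 ≤ c) (V : Ω → ℝ≥0∞) {m n : ℕ}
    (hnm : c * n ≤ m) : c • trunc V n ≤ trunc (smulRate c V) m := fun ω => by
  rw [smul_trunc_apply hc]
  refine ENNReal.toReal_mono (min_natCast_ne_top _ _) (min_le_min_left _ ?_)
  rw [← ENNReal.ofReal_natCast]
  exact ENNReal.ofReal_le_ofReal hnm

lemma trunc_add_trunc_resid_le (V : Ω → ℝ≥0∞) (n k : ℕ) :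
    trunc V n + trunc (resid V n) k ≤ trunc V (n + k) := by
  have hmin : trunc (fun ω => min (V ω) n) n = trunc V n :=
    funext fun ω => by rw [trunc, trunc, min_assoc, min_self]
  have hsum : (fun ω => min (V ω) n) + resid V n = V :=
    funext fun ω => add_tsub_cancel_of_le (min_le_left _ _)
  simpa only [hmin, hsum] using trunc_add_trunc_le (fun ω => min (V ω) n) (resid V n) n k

lemma smulRate_inv_smulRate {c : ℝ} (hc : 0 < c) (V : Ω → ℝ≥0∞) :
    smulRate c⁻¹ (smulRate c V) = V := funext fun ω => by
  rw [smulRate, smulRate, ← mul_assoc, ← ENNReal.ofReal_mul (inv_pos.2 hc).le,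
    inv_mul_cancel₀ hc.ne', ENNReal.ofReal_one, one_mul]

lemma smulRate_add_self {c : ℝ} (hc : 0 ≤ c) (V : Ω → ℝ≥0∞) :
    smulRate c V + V = smulRate (c + 1) V := funext fun ω => by
  rw [Pi.add_apply, smulRate, smulRate, ENNReal.ofReal_add hc zero_le_one, ENNReal.ofReal_one,
    add_mul, one_mul]

variable [MeasurableSpace Ω] {μ : Measure Ω}

lemma LocallyMeasurable.add (hV : LocallyMeasurable μ V) (hW : LocallyMeasurable μ W) :
    LocallyMeasurable μ (V + W) :=
  (hV.prodMk hW).measurable_comp measurable_add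

lemma LocallyMeasurable.smulRate (hV : LocallyMeasurable μ V) (c : ℝ) :
    LocallyMeasurable μ (smulRate c V) :=
  hV.measurable_comp (measurable_const_mul _)

lemma LocallyMeasurable.resid (hV : LocallyMeasurable μ V) (n : ℕ) :
    LocallyMeasurable μ (resid V n) :=
  hV.measurable_comp (φ := fun v => v - min v n) (by fun_prop)

/-- The truncation `V ∧ n`, as a bounded locally measurable function. -/
def truncRate (hV : LocallyMeasurable μ V) (n : ℕ) : boundedRates μ :=
  ⟨trunc V n, hV.measurable_comp (φ := fun v => (min v n).toReal) (by fun_prop), n,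
    fun ω => (abs_of_nonneg (trunc_nonneg V n ω)).trans_le (trunc_le V n ω)⟩

end Truncation

section AbsorptionSemigroup

variable {Ω : Type*} [MeasurableSpace Ω] {μ : Measure Ω} {p : ℝ≥0∞} [Fact (1 ≤ p)]
  {L P Q R R' T U : ℝ → Lp ℝ p μ →L[ℝ] Lp ℝ p μ} {V W : Ω → ℝ≥0∞}

/-! ### Absorption semigroups -/

lemma IsPerturbedSG.familyLE_of_trunc (hp : p ≠ ∞) (hT : IsC0Semigroup T)
    (hTpos : FamilyLE 0 T) (hV : LocallyMeasurable μ V) {m n : ℕ} (hmn : m ≤ n)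
    (hP : IsPerturbedSG μ p T P (trunc V n)) (hQ : IsPerturbedSG μ p T Q (trunc V m)) :
    FamilyLE P Q :=
  familyLE (W := truncRate hV n) (W' := truncRate hV m) hp hT hT hTpos (.refl T) hP hQ
    (trunc_mono V hmn)

lemma LocallyMeasurable.exists_isAbsorptionSG (hp : p ≠ ∞) (hV : LocallyMeasurable μ V)
    (hT : IsC0Semigroup T) (hTpos : FamilyLE 0 T) : ∃ R, IsAbsorptionSG μ p T V R := by
  choose Q hQ using fun n => hT.exists_isPerturbedSG hp (truncRate hV n)
  obtain ⟨R, hR⟩ := (hasOrderContinuousNorm_Lp hp).exists_tendstoStrongly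
    (fun n => (hQ n).nonneg hp hT hTpos)
    fun m n hmn => IsPerturbedSG.familyLE_of_trunc hp hT hTpos hV hmn (hQ n) (hQ m)
  exact ⟨R, Q, hQ, hR⟩

namespace IsAbsorptionSG

lemma le_trunc (hp : p ≠ ∞) (hT : IsC0Semigroup T) (hTpos : FamilyLE 0 T)
    (hV : LocallyMeasurable μ V) (hR : IsAbsorptionSG μ p T V R) {n : ℕ}
    (hQ : IsPerturbedSG μ p T Q (trunc V n)) :
    FamilyLE R Q := by
  obtain ⟨S, hS, hlim⟩ := hR
  exact TendstoStrongly.le_of_eventually_le hlim ((eventually_ge_atTop n).mono fun m hm =>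
    IsPerturbedSG.familyLE_of_trunc hp hT hTpos hV hm (hS m) hQ)

lemma ge_of_forall_trunc (hR : IsAbsorptionSG μ p T V R)
    (h : ∀ n Q, IsPerturbedSG μ p T Q (trunc V n) → FamilyLE L Q) : FamilyLE L R := by
  obtain ⟨S, hS, hlim⟩ := hR
  exact TendstoStrongly.ge_of_eventually_ge hlim (Eventually.of_forall fun n => h n _ (hS n))

lemma isSemigroup (hR : IsAbsorptionSG μ p T V R) : IsSemigroup R := by
  obtain ⟨S, hS, hlim⟩ := hR
  exact TendstoStrongly.isSemigroup hlim fun n => (hS n).1.1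

lemma nonneg (hp : p ≠ ∞) (hT : IsC0Semigroup T) (hTpos : FamilyLE 0 T)
    (hV : LocallyMeasurable μ V) (hR : IsAbsorptionSG μ p T V R) : FamilyLE 0 R :=
  hR.ge_of_forall_trunc fun n _ hQ => IsPerturbedSG.nonneg (W := truncRate hV n) hp hT hTpos hQ

lemma le_self (hp : p ≠ ∞) (hT : IsC0Semigroup T) (hTpos : FamilyLE 0 T)
    (hV : LocallyMeasurable μ V) (hR : IsAbsorptionSG μ p T V R) : FamilyLE R T := by
  have hV0 : truncRate hV 0 = 0 := Subtype.ext <| funext fun ω =>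
    le_antisymm ((trunc_le V 0 ω).trans_eq Nat.cast_zero) (trunc_nonneg V 0 ω)
  exact hR.le_trunc hp hT hTpos hV (n := 0) (hV0 ▸ IsPerturbedSG.zero hp hT :
    IsPerturbedSG μ p T T (truncRate hV 0))

lemma isC0Semigroup_of_le (hp : p ≠ ∞) (hT : IsC0Semigroup T) (hTpos : FamilyLE 0 T)
    (hV : LocallyMeasurable μ V) (hR : IsAbsorptionSG μ p T V R) (hLR : FamilyLE L R)
    (hL : ∀ f, Tendsto (fun t => L t f) (𝓝[≥] 0) (𝓝 f)) : IsC0Semigroup R :=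
  hR.isSemigroup.isC0Semigroup_of_le_of_le (hR.nonneg hp hT hTpos hV) hT
    (hR.le_self hp hT hTpos hV) hLR hL

-- `P` perturbs `T_V ≤ e^{t(A - V∧n)}` by `W`, and `Q` perturbs `e^{t(A - V∧n)}` by `V∧n - W' ≥ W`.
lemma familyLE_of_add_le (hp : p ≠ ∞) (hT : IsC0Semigroup T) (hTpos : FamilyLE 0 T)
    (hV : LocallyMeasurable μ V) (hR : IsAbsorptionSG μ p T V R) (hRC0 : IsC0Semigroup R)
    {W W' : boundedRates μ} (hP : IsPerturbedSG μ p R P (-W : boundedRates μ))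
    (hQ : IsPerturbedSG μ p T Q W') {n : ℕ} (hW : (W' + W : Ω → ℝ) ≤ trunc V n) :
    FamilyLE P Q := by
  obtain ⟨S, hS⟩ := hT.exists_isPerturbedSG hp (truncRate hV n)
  refine hP.familyLE hp hRC0 hS.1 (hR.nonneg hp hT hTpos hV) (hR.le_trunc hp hT hTpos hV hS)
    ((hS.symm hp hT).trans hp hQ) fun ω => ?_
  have hWω : (W' : Ω → ℝ) ω + (W : Ω → ℝ) ω ≤ trunc V n ω := hW ω
  change -trunc V n ω + (W' : Ω → ℝ) ω ≤ -(W : Ω → ℝ) ω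
  linarith

lemma smul_sub_smul_le (hp : p ≠ ∞) (hT : IsC0Semigroup T) (hTpos : FamilyLE 0 T)
    (hV : LocallyMeasurable μ V) (hR : IsAbsorptionSG μ p T V R) {c : ℝ} (hc : 0 < c)
    (hU : IsAbsorptionSG μ p T (smulRate c V) U) :
    FamilyLE (fun t => (1 + c) • R t - c • T t) U := by
  refine hU.ge_of_forall_trunc fun m Q hQ t ht f hf => ?_
  obtain ⟨n, hn⟩ := exists_nat_ge (m / c)
  obtain ⟨S, hS⟩ := hT.exists_isPerturbedSG hp (truncRate hV n)
  obtain ⟨P, hP⟩ := hS.1.exists_isPerturbedSG hp (c • truncRate hV n)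
  have hST : IsPerturbedSG μ p S T (-((1 : ℝ) • truncRate hV n) : boundedRates μ) := by
    rw [one_smul]
    exact hS.symm hp hT
  have hPQ : FamilyLE P Q := by
    refine (hS.trans hp hP).familyLE (W' := truncRate (hV.smulRate c) m) hp hT hT hTpos
      (.refl T) hQ ?_
    exact (trunc_smulRate_le_smul_trunc hc.le V ((div_le_iff₀' hc).1 hn)).trans
      (le_add_of_nonneg_left (trunc_nonneg V n))
  rw [_root_.sub_apply, _root_.smul_apply, _root_.smul_apply, sub_le_iff_le_add]
  calc (1 + c) • R t f ≤ (1 + c) • S t f :=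
        smul_le_smul_of_nonneg_left (hR.le_trunc hp hT hTpos hV hS t ht f hf) (by positivity)
    _ ≤ (1 : ℝ) • P t f + c • T t f := hP.add_smul_le hp hS.1 (hS.nonneg hp hT hTpos)
        (trunc_nonneg V n) zero_le_one hc.le hST ht hf
    _ ≤ Q t f + c • T t f := by
        rw [one_smul]
        exact add_le_add_left (hPQ t ht f hf) _

lemma isC0Semigroup_smulRate (hp : p ≠ ∞) (hT : IsC0Semigroup T) (hTpos : FamilyLE 0 T)
    (hV : LocallyMeasurable μ V) (hR : IsAbsorptionSG μ p T V R) (hRC0 : IsC0Semigroup R)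
    {c : ℝ} (hc : 0 < c) (hU : IsAbsorptionSG μ p T (smulRate c V) U) : IsC0Semigroup U := by
  refine hU.isC0Semigroup_of_le hp hT hTpos (hV.smulRate c)
    (hR.smul_sub_smul_le hp hT hTpos hV hc hU) fun f => ?_
  have hlim := ((hRC0.tendsto_zero f).const_smul (1 + c)).sub ((hT.tendsto_zero f).const_smul c)
  rwa [← sub_smul, add_sub_cancel_right, one_smul] at hlim

lemma add_le_iterated (hp : p ≠ ∞) (hT : IsC0Semigroup T) (hTpos : FamilyLE 0 T)
    (hV : LocallyMeasurable μ V) (hW : LocallyMeasurable μ W) (hR : IsAbsorptionSG μ p T V R)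
    (hRC0 : IsC0Semigroup R) (hR' : IsAbsorptionSG μ p R W R')
    (hU : IsAbsorptionSG μ p T (V + W) U) (hUC0 : IsC0Semigroup U) : FamilyLE U R' := by
  refine hR'.ge_of_forall_trunc fun n Q hQ => ?_
  obtain ⟨P, hP⟩ := hUC0.exists_isPerturbedSG hp (-truncRate hW n)
  have hPR : FamilyLE P R := hR.ge_of_forall_trunc fun m S hS =>
    hU.familyLE_of_add_le (W' := truncRate hV m) hp hT hTpos (hV.add hW) hUC0 hP hS
      (trunc_add_trunc_le V W m n)
  have hPU : IsPerturbedSG μ p P U (truncRate hW n) := by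
    simpa only [neg_neg] using hP.symm hp hUC0
  exact hPU.familyLE (W' := truncRate hW n) hp hP.1 hRC0
    (hP.nonneg hp hUC0 (hU.nonneg hp hT hTpos (hV.add hW))) hPR hQ le_rfl

lemma smul_sub_le_resid (hp : p ≠ ∞) (hT : IsC0Semigroup T) (hTpos : FamilyLE 0 T)
    (hV : LocallyMeasurable μ V) {ε : ℝ} (hε : 0 < ε)
    (hR : IsAbsorptionSG μ p T (smulRate ε V) R) (hRC0 : IsC0Semigroup R) {n : ℕ}
    (hR' : IsAbsorptionSG μ p R (resid V n) R') {m : ℕ} (hmn : m ≤ ε * n)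
    (hQ : IsPerturbedSG μ p T Q (trunc (smulRate ε V) m)) :
    FamilyLE (fun t => ε⁻¹ • ((ε + 1) • R t - Q t)) R' := by
  refine hR'.ge_of_forall_trunc fun k S hS t ht f hf => ?_
  obtain ⟨P, hP⟩ := hRC0.exists_isPerturbedSG hp (-(ε • truncRate (hV.resid n) k))
  have htrunc : trunc (smulRate ε V) m + ε • trunc (resid V n) k ≤
      trunc (smulRate ε V) ⌈ε * (n + k : ℕ)⌉₊ :=
    calc trunc (smulRate ε V) m + ε • trunc (resid V n) k
        ≤ ε • trunc V n + ε • trunc (resid V n) k :=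
          add_le_add_left (trunc_smulRate_le_smul_trunc hε.le V hmn) _
      _ ≤ ε • trunc V (n + k) := by
          rw [← smul_add]
          exact smul_le_smul_of_nonneg_left (trunc_add_trunc_resid_le V n k) hε.le
      _ ≤ _ := smul_trunc_le_trunc_smulRate hε.le V (Nat.le_ceil _)
  have hPQ : FamilyLE P Q := hR.familyLE_of_add_le (W' := truncRate (hV.smulRate ε) m) hp hT
    hTpos (hV.smulRate ε) hRC0 hP hQ htrunc
  have hS' : IsPerturbedSG μ p R S ((1 : ℝ) • truncRate (hV.resid n) k : boundedRates μ) := by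
    rwa [one_smul]
  have hconv := hS'.add_smul_le hp hRC0 (hR.nonneg hp hT hTpos (hV.smulRate ε))
    (trunc_nonneg _ k) hε.le zero_le_one hP ht hf
  rw [one_smul] at hconv
  rw [_root_.smul_apply, _root_.sub_apply, _root_.smul_apply, inv_smul_le_iff_of_pos hε,
    sub_le_iff_le_add]
  exact hconv.trans (add_le_add_right (hPQ t ht f hf) _)

lemma tendstoStrongly_resid (hp : p ≠ ∞) (hT : IsC0Semigroup T) (hTpos : FamilyLE 0 T)
    (hV : LocallyMeasurable μ V) {ε : ℝ} (hε : 0 < ε)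
    (hR : IsAbsorptionSG μ p T (smulRate ε V) R) (hRC0 : IsC0Semigroup R)
    {Y : ℕ → ℝ → Lp ℝ p μ →L[ℝ] Lp ℝ p μ} (hY : ∀ n, IsAbsorptionSG μ p R (resid V n) (Y n)) :
    TendstoStrongly Y R := fun t ht => tendsto_apply_of_nonneg fun f hf => by
  have hRpos := hR.nonneg hp hT hTpos (hV.smulRate ε)
  obtain ⟨S, hS, hlim⟩ := id hR
  have hfloor : Tendsto (fun n : ℕ => ⌊ε * n⌋₊) atTop atTop :=
    tendsto_nat_floor_atTop.comp (tendsto_natCast_atTop_atTop.const_mul_atTop hε)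
  have hlower := (((hlim t ht f).comp hfloor).const_sub ((ε + 1) • R t f)).const_smul ε⁻¹
  have hlimit : ε⁻¹ • ((ε + 1) • R t f - R t f) = R t f := by
    rw [add_smul, one_smul, add_sub_cancel_right, inv_smul_smul₀ hε.ne']
  rw [hlimit] at hlower
  refine tendsto_of_le_of_le hlower tendsto_const_nhds (Eventually.of_forall fun n => ?_)
    (Eventually.of_forall fun n => (hY n).le_self hp hRC0 hRpos (hV.resid n) t ht f hf)
  have hmn : (⌊ε * n⌋₊ : ℝ) ≤ ε * n := Nat.floor_le (by positivity)
  exact hR.smul_sub_le_resid hp hT hTpos hV hε hRC0 (hY n) hmn (hS _) t ht f hf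

lemma stronglyRegular (hp : p ≠ ∞) (hT : IsC0Semigroup T) (hTpos : FamilyLE 0 T)
    (hV : LocallyMeasurable μ V) (hU : IsAbsorptionSG μ p T V U) (hUC0 : IsC0Semigroup U)
    {ε : ℝ} (hε : 0 < ε) (hR : IsAbsorptionSG μ p T (smulRate ε V) R) :
    StronglyRegular μ p R V := by
  have hRC0 := hU.isC0Semigroup_smulRate hp hT hTpos hV hUC0 hε hR
  refine ⟨⟨hV, ?_⟩, fun Y hY => hR.tendstoStrongly_resid hp hT hTpos hV hε hRC0 hY⟩
  have hRpos := hR.nonneg hp hT hTpos (hV.smulRate ε)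
  obtain ⟨R', hR'⟩ := hV.exists_isAbsorptionSG hp hRC0 hRpos
  obtain ⟨U', hU'⟩ := (hV.smulRate (ε + 1)).exists_isAbsorptionSG hp hT hTpos
  have hU'C0 := hU.isC0Semigroup_smulRate hp hT hTpos hV hUC0 (by positivity) hU'
  rw [← smulRate_add_self hε.le] at hU'
  have hle := hR.add_le_iterated hp hT hTpos (hV.smulRate ε) hV hRC0 hR' hU' hU'C0
  exact ⟨R', hR', hR'.isC0Semigroup_of_le hp hRC0 hRpos hV hle hU'C0.tendsto_zero⟩

end IsAbsorptionSG

end AbsorptionSemigroup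

end Absorption

/-- If `V : Ω → [0,∞]` is `T`-admissible, then for every `ε > 0` the rate
`V` is strongly `T_{εV}`-regular; in particular every positive multiple of `V` is strongly
`T_V`-regular. -/
theorem statement7
    {Ω : Type*} [MeasurableSpace Ω] (μ : Measure Ω) (p : ℝ≥0∞) [Fact (1 ≤ p)] (hp : p ≠ ∞)
    (T : ℝ → Lp ℝ p μ →L[ℝ] Lp ℝ p μ)
    (hT : IsC0Semigroup T) (hTpos : IsPositiveSG T)
    (V : Ω → ℝ≥0∞) (hVmeas : LocallyMeasurable μ V)
    -- the absorption semigroup `T_V`, a `C₀`-semigroup (`V` is `T`-admissible)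
    (TV : ℝ → Lp ℝ p μ →L[ℝ] Lp ℝ p μ)
    (hTV : IsAbsorptionSG μ p T V TV) (hTVC0 : IsC0Semigroup TV) :
    -- `V` is strongly `T_{εV}`-regular for every `ε > 0` …
    (∀ ε : ℝ, 0 < ε → ∀ Sε : ℝ → Lp ℝ p μ →L[ℝ] Lp ℝ p μ,
      IsAbsorptionSG μ p T (smulRate ε V) Sε → StronglyRegular μ p Sε V) ∧
    -- … in particular every positive multiple of `V` is strongly `T_V`-regular
    (∀ c : ℝ, 0 < c → StronglyRegular μ p TV (smulRate c V)) := by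
  refine ⟨fun ε hε Sε hSε => hTV.stronglyRegular hp hT hTpos hVmeas hTVC0 hε hSε, fun c hc => ?_⟩
  obtain ⟨S, hS⟩ := (hVmeas.smulRate c).exists_isAbsorptionSG hp hT hTpos
  have hSC0 := hTV.isC0Semigroup_smulRate hp hT hTpos hVmeas hTVC0 hc hS
  rw [← smulRate_inv_smulRate hc V] at hTV
  exact hS.stronglyRegular hp hT hTpos (hVmeas.smulRate c) hSC0 (inv_pos.2 hc) hTV
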